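/- arXiv:2309.03782 — 4 statements merged into one kernel-verified Lean document; each statement's English description precedes it below -/
import Mathlib

section
/- Let (U_i)_{i≥1} be a sequence of i.i.d. real-valued random variables with E[U₁]=0, E[U₁²]=σ² and E[U₁⁴]<∞. Let φ be a real number with |φ|<1, and let (v_i)_{i≥1} be a sequence of real numbers with |v_i|≤M₀ for all i, for some constant M₀. Then (1/n)·Σ_{i=1}^n U_i·(Σ_{j=i}^n v_j·φ^{j−i}) converges to 0 almost surely as n→∞. -/
open MeasureTheory ProbabilityTheory Filter Set Topology

lemma aux_moments {Ω : Type*} [MeasurableSpace Ω] (μ : Measure Ω) [IsProbabilityMeasure μ]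
    (Y : ℕ → Ω → ℝ) (hm : ∀ i, Measurable (Y i)) (hind : iIndepFun Y μ)
    (hL : ∀ i, MemLp (Y i) 4 μ) (h0 : ∀ i, ∫ ω, Y i ω ∂μ = 0)
    (B K : ℝ) (hB0 : 0 ≤ B) (hBK : B ^ 2 ≤ K) (h2 : ∀ i, ∫ ω, Y i ω ^ 2 ∂μ ≤ B)
    (h4 : ∀ i, ∫ ω, Y i ω ^ 4 ∂μ ≤ K) (s : Finset ℕ) :
    MemLp (∑ i ∈ s, Y i) 4 μ ∧ ∫ ω, (∑ i ∈ s, Y i) ω ∂μ = 0 ∧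
    ∫ ω, ((∑ i ∈ s, Y i) ω) ^ 2 ∂μ ≤ s.card * B ∧
    ∫ ω, ((∑ i ∈ s, Y i) ω) ^ 4 ∂μ ≤ 3 * (s.card : ℝ) ^ 2 * K := by
  have hpow : ∀ (f : Ω → ℝ), MemLp f 4 μ → ∀ k : ℕ, k ≤ 4 → Integrable (fun ω => f ω ^ k) μ := by
    intro f hf k hk
    have h1 : MemLp f k μ := hf.mono_exponent (by exact_mod_cast hk)
    have h3 := h1.integrable_norm_pow' 
    refine (integrable_norm_iff ?_).1 (by simpa [norm_pow] using h3)
    exact hf.aestronglyMeasurable.pow k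
  induction s using Finset.induction_on with
  | empty => simp
  | insert i s hi ih =>
    obtain ⟨ihL, ih0, ih2, ih4⟩ := ih
    have hI : IndepFun (∑ j ∈ s, Y j) (Y i) μ := hind.indepFun_finsetSum_of_notMem hm hi
    rw [Finset.sum_insert hi, Finset.card_insert_of_notMem hi]
    set S := ∑ j ∈ s, Y j with hS
    have hprodI : ∀ k l : ℕ, k ≤ 4 → l ≤ 4 → Integrable (fun ω => S ω ^ k * Y i ω ^ l) μ := by
      intro k l hk hl
      have := hI.comp (φ := fun x => x ^ k) (ψ := fun x => x ^ l) (by fun_prop) (by fun_prop)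
      exact this.integrable_mul (hpow _ ihL k hk) (hpow _ (hL i) l hl)
    have hprod : ∀ k l : ℕ, k ≤ 4 → l ≤ 4 → ∫ ω, S ω ^ k * Y i ω ^ l ∂μ
        = (∫ ω, S ω ^ k ∂μ) * ∫ ω, Y i ω ^ l ∂μ := by
      intro k l hk hl
      have := hI.comp (φ := fun x => x ^ k) (ψ := fun x => x ^ l) (by fun_prop) (by fun_prop)
      exact this.integral_fun_mul_eq_mul_integral (hpow _ ihL k hk).aestronglyMeasurable
        (hpow _ (hL i) l hl).aestronglyMeasurable
    have iS : Integrable S μ := by simpa using hpow _ ihL 1 (by norm_num)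
    have iY : Integrable (Y i) μ := by simpa using hpow _ (hL i) 1 (by norm_num)
    have e11 := hprod 1 1 (by norm_num) (by norm_num)
    have e31 := hprod 3 1 (by norm_num) (by norm_num)
    have e22 := hprod 2 2 (by norm_num) (by norm_num)
    have e13 := hprod 1 3 (by norm_num) (by norm_num)
    have i11 := hprodI 1 1 (by norm_num) (by norm_num)
    have i31 := hprodI 3 1 (by norm_num) (by norm_num)
    have i22 := hprodI 2 2 (by norm_num) (by norm_num)
    have i13 := hprodI 1 3 (by norm_num) (by norm_num)
    have jS2 := hpow _ ihL 2 (by norm_num)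
    have jS4 := hpow _ ihL 4 (by norm_num)
    have jY2 := hpow _ (hL i) 2 (by norm_num)
    have jY4 := hpow _ (hL i) 4 (by norm_num)
    simp only [pow_one, ih0, h0, mul_zero, zero_mul] at e11 e31 e22 e13 i11 i31 i13
    refine ⟨(hL i).add ihL, ?_, ?_, ?_⟩
    · simp only [Pi.add_apply]
      rw [integral_add iY iS, ih0, h0, add_zero]
    · have : ∀ ω, (Y i + S) ω ^ 2 = (Y i ω ^ 2 + S ω ^ 2) + 2 * (S ω * Y i ω) := by
        intro ω; simp only [Pi.add_apply]; ring
      simp only [this]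
      rw [integral_add (jY2.fun_add jS2) (i11.const_mul 2), integral_add jY2 jS2,
        integral_const_mul, e11]
      push_cast
      linarith [h2 i]
    · have : ∀ ω, (Y i + S) ω ^ 4 = (((Y i ω ^ 4 + S ω ^ 4) + 4 * (S ω ^ 3 * Y i ω))
          + 6 * (S ω ^ 2 * Y i ω ^ 2)) + 4 * (S ω * Y i ω ^ 3) := by
        intro ω; simp only [Pi.add_apply]; ring
      simp only [this]
      rw [integral_add (((jY4.fun_add jS4).fun_add (i31.const_mul 4)).fun_add (i22.const_mul 6))
          (i13.const_mul 4),
        integral_add ((jY4.fun_add jS4).fun_add (i31.const_mul 4)) (i22.const_mul 6),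
        integral_add (jY4.fun_add jS4) (i31.const_mul 4), integral_add jY4 jS4,
        integral_const_mul, integral_const_mul, integral_const_mul, e31, e22, e13]
      have hc : (0 : ℝ) ≤ s.card := by positivity
      have h5 : (∫ ω, S ω ^ 2 ∂μ) * ∫ ω, Y i ω ^ 2 ∂μ ≤ (s.card * B) * B :=
        mul_le_mul ih2 (h2 i) (integral_nonneg fun ω => by positivity) (by positivity)
      have h6 : (s.card * B) * B ≤ s.card * K := by nlinarith
      have hK : 0 ≤ K := le_trans (by positivity) hBK
      push_cast
      nlinarith [h4 i]

lemma aux_geom (φ : ℝ) (hφ : |φ| < 1) (M₀ : ℝ) (v : ℕ → ℝ) (hv : ∀ i, |v i| ≤ M₀) (i n : ℕ) :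
    |∑ j ∈ Finset.Icc i n, v j * φ ^ (j - i)| ≤ M₀ * (1 - |φ|)⁻¹ := by
  have hM : 0 ≤ M₀ := (abs_nonneg _).trans (hv 0)
  calc _ ≤ ∑ j ∈ Finset.Icc i n, |v j * φ ^ (j - i)| := Finset.abs_sum_le_sum_abs _ _
    _ ≤ ∑ j ∈ Finset.Icc i n, M₀ * |φ| ^ (j - i) := by
        refine Finset.sum_le_sum fun j _ => ?_
        rw [abs_mul, abs_pow]
        exact mul_le_mul_of_nonneg_right (hv j) (by positivity)
    _ = M₀ * ∑ k ∈ Finset.range (n + 1 - i), |φ| ^ k := by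
        rw [← Finset.mul_sum, ← Finset.Ico_add_one_right_eq_Icc, Finset.sum_Ico_eq_sum_range]
        simp
    _ ≤ _ := by
        refine mul_le_mul_of_nonneg_left ?_ hM
        rw [← tsum_geometric_of_lt_one (abs_nonneg _) hφ]
        exact (summable_geometric_of_lt_one (abs_nonneg _) hφ).sum_le_tsum _
          fun _ _ => by positivity

/-- For i.i.d. mean-zero random variables `U` with finite fourth moment,
`|φ| < 1`, and a uniformly bounded real sequence `v`,
`(1/n) ∑_{i=1}^n U_i (∑_{j=i}^n v_j φ^(j-i))` converges to `0` almost surely. -/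
theorem stmt0 {Ω : Type*} [MeasurableSpace Ω] (μ : Measure Ω) [IsProbabilityMeasure μ]
    (U : ℕ → Ω → ℝ) (hUmeas : ∀ i, Measurable (U i))
    (hUindep : iIndepFun U μ)
    (hUident : ∀ i, μ.map (U i) = μ.map (U 1))
    (σ : ℝ)
    (hUmean : ∫ ω, U 1 ω ∂μ = 0)
    (hUvar : ∫ ω, (U 1 ω) ^ 2 ∂μ = σ ^ 2)
    (hU4 : Integrable (fun ω => (U 1 ω) ^ 4) μ)
    (φ : ℝ) (hφ : |φ| < 1)
    (M₀ : ℝ) (v : ℕ → ℝ) (hv : ∀ i, |v i| ≤ M₀) :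
    ∀ᵐ ω ∂μ, Tendsto (fun n : ℕ =>
      (1 / (n : ℝ)) * ∑ i ∈ Finset.Icc 1 n,
        U i ω * (∑ j ∈ Finset.Icc i n, v j * φ ^ (j - i)))
      atTop (𝓝 0) := by
  set A := M₀ * (1 - |φ|)⁻¹ with hA
  set m4 := ∫ ω, U 1 ω ^ 4 ∂μ with hm4
  have hid : ∀ i, IdentDistrib (U i) (U 1) μ μ := fun i =>
    ⟨(hUmeas i).aemeasurable, (hUmeas 1).aemeasurable, hUident i⟩
  have hU1L : MemLp (U 1) 4 μ := by
    have h := (integrable_norm_rpow_iff (p := 4) (μ := μ) (f := U 1)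
      (hUmeas 1).aestronglyMeasurable (by norm_num) (by norm_num)).1
    apply h
    have e : (fun ω => ‖U 1 ω‖ ^ (4 : ENNReal).toReal) = fun ω => U 1 ω ^ 4 := by
      funext ω
      have : (4 : ENNReal).toReal = ((4 : ℕ) : ℝ) := by simp
      rw [this, Real.rpow_natCast, Real.norm_eq_abs, Even.pow_abs (by decide)]
    rw [e]; exact hU4
  have hUL : ∀ i, MemLp (U i) 4 μ := fun i => (hid i).memLp_iff.2 hU1L
  have hU0 : ∀ i, ∫ ω, U i ω ∂μ = 0 := fun i => (hid i).integral_eq.trans hUmean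
  have hU2 : ∀ i, ∫ ω, U i ω ^ 2 ∂μ = σ ^ 2 := fun i =>
    ((hid i).comp (u := fun x => x ^ 2) (by fun_prop)).integral_eq.trans hUvar
  have hU4' : ∀ i, ∫ ω, U i ω ^ 4 ∂μ = m4 := fun i =>
    ((hid i).comp (u := fun x => x ^ 4) (by fun_prop)).integral_eq
  have hm40 : 0 ≤ m4 := integral_nonneg fun ω => by positivity
  set K := A ^ 4 * (m4 + σ ^ 4) with hK
  have hA0 : ∀ i n, |∑ j ∈ Finset.Icc i n, v j * φ ^ (j - i)| ≤ A := aux_geom φ hφ M₀ v hv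
  set T : ℕ → Ω → ℝ := fun n ω => ∑ i ∈ Finset.Icc 1 n,
        U i ω * (∑ j ∈ Finset.Icc i n, v j * φ ^ (j - i)) with hT
  have key : ∀ n, MemLp (T n) 4 μ ∧ ∫ ω, T n ω ^ 4 ∂μ ≤ 3 * (n : ℝ) ^ 2 * K := by
    intro n
    have hA1 := fun i => hA0 i n
    set a : ℕ → ℝ := fun i => ∑ j ∈ Finset.Icc i n, v j * φ ^ (j - i) with ha
    have ha2 : ∀ i, a i ^ 2 ≤ A ^ 2 := fun i => sq_le_sq' (abs_le.1 (hA1 i)).1 (abs_le.1 (hA1 i)).2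
    have := aux_moments μ (fun i ω => U i ω * a i) (fun i => (hUmeas i).mul_const _)
      (hUindep.comp (fun i x => x * a i) (fun i => by fun_prop))
      (fun i => (hUL i).mul_const _)
      (fun i => by rw [integral_mul_const, hU0, zero_mul]) (A ^ 2 * σ ^ 2) K (by positivity)
      (by rw [hK]; nlinarith [show 0 ≤ A ^ 4 * m4 by positivity])
      (fun i => by
        simp only [mul_pow]
        rw [integral_mul_const, hU2, mul_comm]
        exact mul_le_mul_of_nonneg_right (ha2 i) (by positivity))
      (fun i => by
        simp only [mul_pow]
        rw [integral_mul_const, hU4', mul_comm, hK]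
        have h4 : a i ^ 4 ≤ A ^ 4 := by
          have := pow_le_pow_left₀ (sq_nonneg _) (ha2 i) 2
          calc a i ^ 4 = (a i ^ 2) ^ 2 := by ring
            _ ≤ _ := this
            _ = A ^ 4 := by ring
        exact mul_le_mul h4 (le_add_of_nonneg_right (by positivity)) hm40 (by positivity))
      (Finset.Icc 1 n)
    have e : (∑ i ∈ Finset.Icc 1 n, fun ω => U i ω * a i) = T n := by
      funext ω; simp [hT, ha]
    rw [e] at this
    refine ⟨this.1, by simpa using this.2.2.2⟩
  have hTm : ∀ n, Measurable (T n) := fun n => by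
    simp only [hT]; fun_prop
  have hTi : ∀ n, Integrable (fun ω => T n ω ^ 4) μ := fun n => by
    have h3 := (key n).1.integrable_norm_pow (p := 4) (by norm_num)
    refine h3.congr (ae_of_all _ fun ω => ?_)
    simp only [Real.norm_eq_abs]
    rw [Even.pow_abs (by decide)]
  set F : ℕ → Ω → ENNReal := fun n ω => ENNReal.ofReal ((1 / (n : ℝ) * T n ω) ^ 4) with hF
  have hFm : ∀ n, Measurable (F n) := fun n =>
    (((hTm n).const_mul _).pow_const 4).ennreal_ofReal
  have hFb : ∀ n, ∫⁻ ω, F n ω ∂μ ≤ ENNReal.ofReal (3 * K * (1 / (n : ℝ) ^ 2)) := by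
    intro n
    simp only [hF, mul_pow]
    rw [← ofReal_integral_eq_lintegral_ofReal ((hTi n).const_mul _)
      (ae_of_all _ fun ω => by positivity), integral_const_mul]
    apply ENNReal.ofReal_le_ofReal
    rcases Nat.eq_zero_or_pos n with rfl | hn
    · simp
    · have hn' : (0 : ℝ) < n := by exact_mod_cast hn
      calc _ ≤ (1 / (n : ℝ)) ^ 4 * (3 * (n : ℝ) ^ 2 * K) :=
            mul_le_mul_of_nonneg_left (key n).2 (by positivity)
        _ = _ := by field_simp
  have hsum : ∫⁻ ω, ∑' n, F n ω ∂μ ≠ ⊤ := by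
    rw [lintegral_tsum fun n => (hFm n).aemeasurable]
    refine ne_top_of_le_ne_top ?_ (ENNReal.tsum_le_tsum hFb)
    have hs : Summable fun n : ℕ => 3 * K * (1 / (n : ℝ) ^ 2) :=
      (Real.summable_one_div_nat_pow.2 (by norm_num)).mul_left _
    exact hs.tsum_ofReal_ne_top
  filter_upwards [ae_lt_top (Measurable.tsum hFm) hsum] with ω hω
  have h1 := ENNReal.tendsto_atTop_zero_of_tsum_ne_top hω.ne
  have h2 : Tendsto (fun n : ℕ => (1 / (n : ℝ) * T n ω) ^ 4) atTop (𝓝 0) := by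
    have := (ENNReal.tendsto_toReal ENNReal.zero_ne_top).comp h1
    refine this.congr fun n => ?_
    simp only [hF, Function.comp]
    rw [ENNReal.toReal_ofReal (by positivity)]
  rw [Metric.tendsto_atTop] at h2 ⊢
  intro ε hε
  obtain ⟨N, hN⟩ := h2 (ε ^ 4) (by positivity)
  refine ⟨N, fun n hn => ?_⟩
  have := hN n hn
  rw [Real.dist_eq, sub_zero, abs_pow] at this
  rw [Real.dist_eq, sub_zero]
  exact lt_of_pow_lt_pow_left₀ 4 hε.le this
end

section
/- Let (v_i)_{i≥1} be a sequence of real numbers with |v_i|≤M₀ for all i, for some constant M₀. Then (1/n)·Σ_{i=1}^n v_i·ε_i converges to 0 almost surely as n→∞. -/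
open MeasureTheory ProbabilityTheory Filter Set Topology

lemma aux_integrable_mul {Ω : Type*} [MeasurableSpace Ω] {μ : Measure Ω}
    {T x : Ω → ℝ} (h : IndepFun T x μ)
    (hT : ∀ p ≤ 4, Integrable (fun ω => T ω ^ p) μ)
    (hx : ∀ p ≤ 4, Integrable (fun ω => x ω ^ p) μ) (a b : ℕ) (ha : a ≤ 4) (hb : b ≤ 4) :
    Integrable (fun ω => T ω ^ a * x ω ^ b) μ ∧
    ∫ ω, T ω ^ a * x ω ^ b ∂μ = (∫ ω, T ω ^ a ∂μ) * ∫ ω, x ω ^ b ∂μ := by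
  have h' : IndepFun (fun ω => T ω ^ a) (fun ω => x ω ^ b) μ :=
    h.comp (φ := fun y : ℝ => y ^ a) (ψ := fun y : ℝ => y ^ b) (by fun_prop) (by fun_prop)
  exact ⟨h'.integrable_mul (hT a ha) (hx b hb),
    h'.integral_fun_mul_eq_mul_integral (hT a ha).1 (hx b hb).1⟩

lemma aux_step {Ω : Type*} [MeasurableSpace Ω] {μ : Measure Ω} [IsProbabilityMeasure μ]
    {T x : Ω → ℝ} (h : IndepFun T x μ)
    (hT : ∀ p ≤ 4, Integrable (fun ω => T ω ^ p) μ)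
    (hx : ∀ p ≤ 4, Integrable (fun ω => x ω ^ p) μ)
    (hT0 : ∫ ω, T ω ∂μ = 0) (hx0 : ∫ ω, x ω ∂μ = 0) :
    (∀ p ≤ 4, Integrable (fun ω => (T ω + x ω) ^ p) μ) ∧
    ∫ ω, (T ω + x ω) ∂μ = 0 ∧
    ∫ ω, (T ω + x ω) ^ 2 ∂μ = ∫ ω, T ω ^ 2 ∂μ + ∫ ω, x ω ^ 2 ∂μ ∧
    ∫ ω, (T ω + x ω) ^ 4 ∂μ = ∫ ω, T ω ^ 4 ∂μ +
      6 * (∫ ω, T ω ^ 2 ∂μ) * (∫ ω, x ω ^ 2 ∂μ) + ∫ ω, x ω ^ 4 ∂μ := by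
  have key := aux_integrable_mul h hT hx
  have main : ∀ p ≤ 4, Integrable (fun ω => (T ω + x ω) ^ p) μ ∧
      ∫ ω, (T ω + x ω) ^ p ∂μ = ∑ m ∈ Finset.range (p + 1),
        ((∫ ω, T ω ^ m ∂μ) * ∫ ω, x ω ^ (p - m) ∂μ) * (p.choose m : ℝ) := by
    intro p hp
    simp only [add_pow]
    have hi : ∀ m ∈ Finset.range (p + 1),
        Integrable (fun ω => T ω ^ m * x ω ^ (p - m) * (p.choose m : ℝ)) μ := by
      intro m hm
      have := Finset.mem_range.1 hm
      exact (key m (p - m) (by omega) (by omega)).1.mul_const _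
    refine ⟨integrable_finsetSum _ hi, ?_⟩
    rw [integral_finsetSum _ hi]
    refine Finset.sum_congr rfl fun m hm => ?_
    have := Finset.mem_range.1 hm
    rw [integral_mul_const, (key m (p - m) (by omega) (by omega)).2]
  refine ⟨fun p hp => (main p hp).1, ?_, ?_, ?_⟩
  · have := (main 1 (by norm_num)).2
    simpa [Finset.sum_range_succ, hT0, hx0] using this
  · rw [(main 2 (by norm_num)).2]
    simp [Finset.sum_range_succ, hT0, hx0]
    ring
  · rw [(main 4 (by norm_num)).2]
    have : Nat.choose 4 2 = 6 := rfl
    simp [Finset.sum_range_succ, hT0, hx0, this]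
    ring

lemma aux_moment {Ω : Type*} [MeasurableSpace Ω] {μ : Measure Ω} [IsProbabilityMeasure μ]
    {X : ℕ → Ω → ℝ} (hm : ∀ k, Measurable (X k)) (hind : iIndepFun X μ)
    (hX : ∀ k, ∀ p ≤ 4, Integrable (fun ω => X k ω ^ p) μ)
    (hX0 : ∀ k, ∫ ω, X k ω ∂μ = 0) (s K W : ℝ)
    (hX2 : ∀ k, ∫ ω, X k ω ^ 2 ∂μ = s) (hX4 : ∀ k, ∫ ω, X k ω ^ 4 ∂μ = K)
    (w : ℕ → ℝ) (hw : ∀ k, |w k| ≤ W) (n : ℕ) :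
    (∀ p ≤ 4, Integrable (fun ω => (∑ k ∈ Finset.Icc 1 n, w k * X k ω) ^ p) μ) ∧
    ∫ ω, (∑ k ∈ Finset.Icc 1 n, w k * X k ω) ∂μ = 0 ∧
    ∫ ω, (∑ k ∈ Finset.Icc 1 n, w k * X k ω) ^ 2 ∂μ ≤ n * (W ^ 2 * s) ∧
    ∫ ω, (∑ k ∈ Finset.Icc 1 n, w k * X k ω) ^ 4 ∂μ ≤ (n : ℝ) ^ 2 * (W ^ 4 * (3 * s ^ 2 + K)) := by
  have hs : 0 ≤ s := by rw [← hX2 0]; exact integral_nonneg fun ω => by positivity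
  have hK : 0 ≤ K := by rw [← hX4 0]; exact integral_nonneg fun ω => by positivity
  induction n with
  | zero =>
    refine ⟨?_, by simp, by simp, by simp⟩
    intro p _
    simp
  | succ n ih =>
    obtain ⟨i1, i2, i3, i4⟩ := ih
    have hind' : iIndepFun (fun k ω => w k * X k ω) μ :=
      hind.comp (fun k y => w k * y) (fun k => by fun_prop)
    have hI : IndepFun (fun ω => ∑ k ∈ Finset.Icc 1 n, w k * X k ω)
        (fun ω => w (n + 1) * X (n + 1) ω) μ := by
      have := hind'.indepFun_finsetSum_of_notMem (fun k => by have := hm k; fun_prop)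
        (s := Finset.Icc 1 n) (i := n + 1) (by simp)
      convert this using 1
      ext ω
      simp
    have hx : ∀ p ≤ 4, Integrable (fun ω => (w (n + 1) * X (n + 1) ω) ^ p) μ := by
      intro p hp
      simp only [mul_pow]
      exact (hX (n + 1) p hp).const_mul _
    obtain ⟨j1, j2, j3, j4⟩ := aux_step hI i1 hx i2 (by rw [integral_const_mul, hX0, mul_zero])
    simp only [Finset.sum_Icc_succ_top (Nat.le_add_left 1 n)]
    have e2 : ∫ ω, (w (n + 1) * X (n + 1) ω) ^ 2 ∂μ ≤ W ^ 2 * s := by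
      simp only [mul_pow]
      rw [integral_const_mul, hX2, ← sq_abs]
      have := hw (n + 1)
      gcongr
    have e20 : 0 ≤ ∫ ω, (w (n + 1) * X (n + 1) ω) ^ 2 ∂μ :=
      integral_nonneg fun ω => by positivity
    have e4 : ∫ ω, (w (n + 1) * X (n + 1) ω) ^ 4 ∂μ ≤ W ^ 4 * K := by
      simp only [mul_pow]
      rw [integral_const_mul, hX4, ← Even.pow_abs (by decide : Even 4)]
      have := hw (n + 1)
      gcongr
    refine ⟨j1, j2, ?_, ?_⟩
    · rw [j3]; push_cast; linarith
    · rw [j4]; push_cast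
      have : (∫ ω, (∑ k ∈ Finset.Icc 1 n, w k * X k ω) ^ 2 ∂μ) *
          (∫ ω, (w (n + 1) * X (n + 1) ω) ^ 2 ∂μ) ≤ (n * (W ^ 2 * s)) * (W ^ 2 * s) := by
        gcongr
      have h3 : 0 ≤ (n : ℝ) * (W ^ 4 * K) := by positivity
      have h4 : 0 ≤ W ^ 4 * s ^ 2 := by positivity
      nlinarith

lemma aux_ae {Ω : Type*} [MeasurableSpace Ω] {μ : Measure Ω}
    {Y : ℕ → Ω → ℝ} (hY : ∀ n, Integrable (Y n) μ) (hY0 : ∀ n ω, 0 ≤ Y n ω)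
    (c : ℕ → ℝ) (hc : Summable c) (hYc : ∀ n, ∫ ω, Y n ω ∂μ ≤ c n) :
    ∀ᵐ ω ∂μ, Tendsto (fun n => Y n ω) atTop (𝓝 0) := by
  have h1 : ∫⁻ ω, ∑' n, ENNReal.ofReal (Y n ω) ∂μ ≠ ⊤ := by
    rw [lintegral_tsum (fun n => (hY n).1.aemeasurable.ennreal_ofReal)]
    have : ∀ n, ∫⁻ ω, ENNReal.ofReal (Y n ω) ∂μ ≤ ENNReal.ofReal (c n) := by
      intro n
      rw [← ofReal_integral_eq_lintegral_ofReal (hY n) (Eventually.of_forall (hY0 n))]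
      exact ENNReal.ofReal_le_ofReal (hYc n)
    exact ne_top_of_le_ne_top hc.tsum_ofReal_ne_top (ENNReal.tsum_le_tsum this)
  have h2 := ae_lt_top' (AEMeasurable.tsum
    (fun n => (hY n).1.aemeasurable.ennreal_ofReal)) h1
  filter_upwards [h2] with ω hω
  have h3 := ENNReal.tendsto_atTop_zero_of_tsum_ne_top hω.ne
  have h4 := (ENNReal.tendsto_toReal ENNReal.zero_ne_top).comp h3
  refine Tendsto.congr (fun n => ?_) h4
  simp [ENNReal.toReal_ofReal (hY0 n ω)]

lemma aux_weights (φ M₀ : ℝ) (hφ1 : |φ| < 1) (v : ℕ → ℝ) (hv : ∀ i, |v i| ≤ M₀) (n k : ℕ) :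
    |∑ i ∈ Finset.Icc k n, v i * φ ^ (i - k)| ≤ M₀ * (1 - |φ|)⁻¹ := by
  have hM : 0 ≤ M₀ := (abs_nonneg _).trans (hv 0)
  calc |∑ i ∈ Finset.Icc k n, v i * φ ^ (i - k)|
      ≤ ∑ i ∈ Finset.Icc k n, |v i * φ ^ (i - k)| := Finset.abs_sum_le_sum_abs _ _
    _ ≤ ∑ i ∈ Finset.Icc k n, M₀ * |φ| ^ (i - k) := by
        refine Finset.sum_le_sum fun i _ => ?_
        rw [abs_mul, abs_pow]
        have := hv i
        gcongr
    _ = M₀ * ∑ i ∈ Finset.range (n + 1 - k), |φ| ^ i := by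
        rw [← Finset.mul_sum, ← Finset.Ico_add_one_right_eq_Icc, Finset.sum_Ico_eq_sum_range]
        simp
    _ ≤ M₀ * (1 - |φ|)⁻¹ := by
        gcongr
        rw [← tsum_geometric_of_lt_one (abs_nonneg _) hφ1]
        exact (summable_geometric_of_lt_one (abs_nonneg _) hφ1).sum_le_tsum _
          (fun i _ => by positivity)

lemma aux_decomp (φ : ℝ) (v : ℕ → ℝ) (u e : ℤ → ℝ) (he : ∀ i, e i = φ * e (i - 1) + u i) (n : ℕ) :
    ∑ i ∈ Finset.Icc 1 n, v i * e (i : ℤ) =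
      (∑ i ∈ Finset.Icc 0 n, v i * φ ^ (i - 0)) * e 0 - v 0 * e 0 +
      ∑ k ∈ Finset.Icc 1 n, (∑ i ∈ Finset.Icc k n, v i * φ ^ (i - k)) * u (k : ℤ) := by
  have h1 : ∀ i : ℕ, e (i : ℤ) = φ ^ i * e 0 + ∑ k ∈ Finset.Icc 1 i, φ ^ (i - k) * u (k : ℤ) := by
    intro i
    induction i with
    | zero => simp
    | succ i ih =>
      rw [he, Finset.sum_Icc_succ_top (Nat.le_add_left 1 i)]
      have : ((i + 1 : ℕ) : ℤ) - 1 = i := by push_cast; ring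
      rw [this, ih, mul_add, Finset.mul_sum]
      have : ∀ k ∈ Finset.Icc 1 i, φ * (φ ^ (i - k) * u (k : ℤ)) = φ ^ (i + 1 - k) * u (k : ℤ) := by
        intro k hk
        rw [Nat.sub_add_comm (Finset.mem_Icc.1 hk).2]
        ring
      rw [Finset.sum_congr rfl this]
      simp
      ring
  have h0 : ∑ i ∈ Finset.Icc 0 n, v i * φ ^ (i - 0) = v 0 + ∑ i ∈ Finset.Icc 1 n, v i * φ ^ i := by
    rw [← Finset.add_sum_Ioc_eq_sum_Icc (Nat.zero_le n)]
    simp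
    rfl
  rw [h0]
  have h2 : ∑ k ∈ Finset.Icc 1 n, (∑ i ∈ Finset.Icc k n, v i * φ ^ (i - k)) * u (k : ℤ) =
      ∑ i ∈ Finset.Icc 1 n, ∑ k ∈ Finset.Icc 1 i, v i * φ ^ (i - k) * u (k : ℤ) := by
    simp only [Finset.sum_mul]
    refine Finset.sum_comm' ?_
    intro a b
    simp only [Finset.mem_Icc]
    omega
  rw [h2, add_mul, add_sub_cancel_left, Finset.sum_mul, ← Finset.sum_add_distrib]
  refine Finset.sum_congr rfl fun i _ => ?_
  rw [h1 i, mul_add, Finset.mul_sum]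
  simp only [mul_assoc]

/-- For a uniformly bounded real sequence `v` and the stationary causal
AR(1) noise `ε`, `(1/n) ∑_{i=1}^n v_i ε_i` converges to `0` almost surely. -/
theorem stmt3
    {Ω : Type*} [MeasurableSpace Ω] (μ : Measure Ω) [IsProbabilityMeasure μ]
    (U : ℤ → Ω → ℝ) (hUmeas : ∀ j, Measurable (U j))
    (hUindep : iIndepFun U μ)
    (hUident : ∀ j, μ.map (U j) = μ.map (U 0))
    (σ : ℝ) (hσ : 0 < σ)
    (hUmean : ∫ ω, U 0 ω ∂μ = 0)
    (hUvar : ∫ ω, (U 0 ω) ^ 2 ∂μ = σ ^ 2)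
    (hU8 : Integrable (fun ω => (U 0 ω) ^ 8) μ)
    (φ : ℝ) (hφ0 : φ ≠ 0) (hφ1 : |φ| < 1)
    (ε : ℤ → Ω → ℝ) (hεmeas : ∀ i, Measurable (ε i))
    (hεsum : ∀ᵐ ω ∂μ, ∀ i : ℤ, HasSum (fun j : ℕ => φ ^ j * U (i - (j : ℤ)) ω) (ε i ω))
    (M₀ : ℝ) (v : ℕ → ℝ) (hv : ∀ i, |v i| ≤ M₀) :
    ∀ᵐ ω ∂μ, Tendsto (fun n : ℕ =>
      (1 / (n : ℝ)) * ∑ i ∈ Finset.Icc 1 n, v i * ε (i : ℤ) ω)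
      atTop (𝓝 0) := by
  have hm4 : MemLp (U 0) 8 μ := by
    rw [← integrable_norm_rpow_iff (hUmeas 0).aestronglyMeasurable (by norm_num) (by norm_num)]
    refine hU8.congr (Eventually.of_forall fun ω => ?_)
    have h8 : (8 : ENNReal).toReal = ((8 : ℕ) : ℝ) := by norm_num
    simp only [h8, Real.rpow_natCast, Real.norm_eq_abs]
    exact (Even.pow_abs (by decide) _).symm
  have hU0 : ∀ p ≤ 4, Integrable (fun ω => U 0 ω ^ p) μ := by
    intro p hp
    have h1 : MemLp (U 0) (p : ENNReal) μ := hm4.mono_exponent (by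
      exact_mod_cast (by omega : p ≤ 8))
    refine (h1.integrable_norm_pow').mono ((hUmeas 0).pow_const p).aestronglyMeasurable
      (Eventually.of_forall fun ω => ?_)
    simp
  have hid : ∀ j, IdentDistrib (U j) (U 0) μ μ := fun j =>
    ⟨(hUmeas j).aemeasurable, (hUmeas 0).aemeasurable, hUident j⟩
  have hidp : ∀ j (p : ℕ), IdentDistrib (fun ω => U j ω ^ p) (fun ω => U 0 ω ^ p) μ μ := fun j p =>
    (hid j).comp (u := fun y : ℝ => y ^ p) (by fun_prop)
  set W : ℝ := M₀ * (1 - |φ|)⁻¹ with hW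
  set K : ℝ := ∫ ω, U 0 ω ^ 4 ∂μ with hK
  have mom := fun n : ℕ => aux_moment (μ := μ) (X := fun (k : ℕ) => U (k : ℤ))
    (fun k => hUmeas _) (hUindep.precomp (g := fun k : ℕ => (k : ℤ)) Nat.cast_injective)
    (fun k p hp => (hidp k p).integrable_iff.2 (hU0 p hp))
    (fun k => (hid k).integral_eq.trans hUmean) (σ ^ 2) K W
    (fun k => (hidp k 2).integral_eq.trans hUvar)
    (fun k => (hidp k 4).integral_eq)
    (fun k => ∑ i ∈ Finset.Icc k n, v i * φ ^ (i - k))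
    (fun k => aux_weights φ M₀ hφ1 v hv n k) n
  have hT := aux_ae (μ := μ) (Y := fun n ω => ((1 / (n : ℝ)) *
      ∑ k ∈ Finset.Icc 1 n, (∑ i ∈ Finset.Icc k n, v i * φ ^ (i - k)) * U (k : ℤ) ω) ^ 4)
    (by
      intro n
      simp only [mul_pow]
      exact ((mom n).1 4 le_rfl).const_mul _)
    (fun n ω => by positivity)
    (fun n => (1 / (n : ℝ) ^ 2) * (W ^ 4 * (3 * (σ ^ 2) ^ 2 + K)))
    ((Real.summable_one_div_nat_pow.2 (by norm_num)).mul_right _)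
    (by
      intro n
      simp only [mul_pow]
      rw [integral_const_mul]
      calc _ ≤ (1 / (n : ℝ)) ^ 4 * ((n : ℝ) ^ 2 * (W ^ 4 * (3 * (σ ^ 2) ^ 2 + K))) := by
            gcongr
            exact (mom n).2.2.2
        _ = _ := by
            rcases Nat.eq_zero_or_pos n with rfl | hn
            · simp
            · field_simp)
  filter_upwards [hT, hεsum] with ω h1 h2
  have hrec : ∀ i, ε i ω = φ * ε (i - 1) ω + U i ω := by
    intro i
    have a := (hasSum_nat_add_iff' 1).2 (h2 i)
    have b := (h2 (i - 1)).mul_left φ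
    have : ε i ω - ∑ j ∈ Finset.range 1, φ ^ j * U (i - (j : ℤ)) ω = φ * ε (i - 1) ω := by
      refine a.unique ?_
      refine Eq.mpr (congrArg (fun f => HasSum f (φ * ε (i - 1) ω)) (funext fun j => ?_)) b
      have : i - ((j + 1 : ℕ) : ℤ) = i - 1 - j := by push_cast; ring
      rw [this]
      ring
    simp at this
    linarith
  have h3 : Tendsto (fun n : ℕ => (1 / (n : ℝ)) *
      ∑ k ∈ Finset.Icc 1 n, (∑ i ∈ Finset.Icc k n, v i * φ ^ (i - k)) * U (k : ℤ) ω)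
      atTop (𝓝 0) := by
    rw [tendsto_zero_iff_abs_tendsto_zero]
    have := h1.rpow_const (p := (1 / 4 : ℝ)) (Or.inr (by norm_num))
    rw [Real.zero_rpow (by norm_num)] at this
    refine this.congr fun n => ?_
    simp only [Function.comp]
    rw [← Even.pow_abs (by decide : Even 4), ← Real.rpow_natCast, ← Real.rpow_mul (abs_nonneg _)]
    norm_num
  have h4 : Tendsto (fun n : ℕ => (1 / (n : ℝ)) *
      ((∑ i ∈ Finset.Icc 0 n, v i * φ ^ (i - 0)) * ε 0 ω - v 0 * ε 0 ω)) atTop (𝓝 0) := by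
    refine squeeze_zero_norm (a := fun n : ℕ => (1 / (n : ℝ)) *
      (W * |ε 0 ω| + |v 0 * ε 0 ω|)) (fun n => ?_) ?_
    · rw [Real.norm_eq_abs, abs_mul, abs_of_nonneg (by positivity : (0 : ℝ) ≤ 1 / (n : ℝ))]
      gcongr
      refine (abs_sub _ _).trans ?_
      rw [abs_mul]
      gcongr
      exact aux_weights φ M₀ hφ1 v hv n 0
    · simpa using tendsto_one_div_atTop_nhds_zero_nat.mul_const (W * |ε 0 ω| + |v 0 * ε 0 ω|)
  have h5 := h4.add h3
  rw [add_zero] at h5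
  refine h5.congr fun n => ?_
  rw [aux_decomp φ v (fun i => U i ω) (fun i => ε i ω) hrec n, mul_add]
end

section
/- (Theorem 1) Almost surely, sup over (γ,g)∈Γ×𝒢 of |Q_n(γ,g) − Q(γ,g) − σ²/(1−φ²)| converges to 0 as n→∞; that is, the average squared error loss Q_n converges uniformly on Γ×𝒢 to Q + σ²/(1−φ²) with probability 1. -/
open MeasureTheory ProbabilityTheory Filter Set Topology

/-- The class 𝒢 of nonincreasing, `[m,M]`-valued, `L`-Lipschitz continuous functions
on `[0,A]`. -/
def inG (A m M L : ℝ) (g : ℝ → ℝ) : Prop :=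
  ContinuousOn g (Set.Icc 0 A) ∧ AntitoneOn g (Set.Icc 0 A) ∧
  (∀ t ∈ Set.Icc (0 : ℝ) A, g t ∈ Set.Icc m M) ∧
  LipschitzOnWith (Real.toNNReal L) g (Set.Icc 0 A)

/-- The limiting criterion `Q(γ, g)`. -/
noncomputable def Qlim (Δ γ₀ : ℝ) (x z g₀ : ℝ → ℝ) (γ : ℝ) (g : ℝ → ℝ) : ℝ :=
  (1 / Δ) * ∫ w in (0 : ℝ)..Δ,
    (Real.log (1 + γ₀ * x w) - Real.log (1 + γ * x w) +
      Real.log (g₀ (z w)) - Real.log (g (z w))) ^ 2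

/-- The empirical average squared error loss `Q_n(γ, g)(ω)`, where the observations are
`yᵢ = log(1+γ₀xᵢ) + log g₀(zᵢ) + εᵢ` with `xᵢ = x(iΔ/n)`, `zᵢ = z(iΔ/n)`. -/
noncomputable def Qemp {Ω : Type*} (Δ γ₀ : ℝ) (x z g₀ : ℝ → ℝ) (ε : ℤ → Ω → ℝ)
    (n : ℕ) (γ : ℝ) (g : ℝ → ℝ) (ω : Ω) : ℝ :=
  (1 / (n : ℝ)) * ∑ i ∈ Finset.Icc 1 n,
    ((Real.log (1 + γ₀ * x ((i : ℝ) * Δ / n)) + Real.log (g₀ (z ((i : ℝ) * Δ / n))) +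
        ε (i : ℤ) ω)
      - Real.log (1 + γ * x ((i : ℝ) * Δ / n)) - Real.log (g (z ((i : ℝ) * Δ / n)))) ^ 2


lemma ae_tendsto_zero_of_summable_integral {Ω : Type*} [MeasurableSpace Ω] {μ : Measure Ω}
    (Z : ℕ → Ω → ℝ) (hint : ∀ k, Integrable (Z k) μ) (hnn : ∀ k ω, 0 ≤ Z k ω)
    (b : ℕ → ℝ) (hb : Summable b) (hZ : ∀ k, ∫ ω, Z k ω ∂μ ≤ b k) :
    ∀ᵐ ω ∂μ, Tendsto (fun k => Z k ω) atTop (𝓝 0) := by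
  have hbn : ∀ k, 0 ≤ b k := fun k => (integral_nonneg (hnn k)).trans (hZ k)
  have h1 : ∫⁻ ω, ∑' k, ENNReal.ofReal (Z k ω) ∂μ ≠ ⊤ := by
    rw [lintegral_tsum (fun k => (hint k).aestronglyMeasurable.aemeasurable.ennreal_ofReal)]
    refine ne_top_of_le_ne_top (b := ∑' k, ENNReal.ofReal (b k)) ?_ ?_
    · rw [← ENNReal.ofReal_tsum_of_nonneg hbn hb]; exact ENNReal.ofReal_ne_top
    · refine ENNReal.tsum_le_tsum fun k => ?_
      rw [← ofReal_integral_eq_lintegral_ofReal (hint k) (ae_of_all _ (hnn k))]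
      exact ENNReal.ofReal_le_ofReal (hZ k)
  have h2 : ∀ᵐ ω ∂μ, ∑' k, ENNReal.ofReal (Z k ω) < ⊤ := by
    refine ae_lt_top' ?_ h1
    exact AEMeasurable.tsum
      (fun k => (hint k).aestronglyMeasurable.aemeasurable.ennreal_ofReal)
  filter_upwards [h2] with ω hω
  have := ENNReal.tendsto_atTop_zero_of_tsum_ne_top hω.ne
  have h3 := (ENNReal.tendsto_toReal ENNReal.zero_ne_top).comp this
  simpa [Function.comp_def, ENNReal.toReal_ofReal (hnn _ ω)] using h3

lemma tendsto_nat_sqrt : Tendsto Nat.sqrt atTop atTop := by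
  refine tendsto_atTop.2 fun b => ?_
  filter_upwards [eventually_ge_atTop (b ^ 2)] with n hn
  exact Nat.le_sqrt'.2 hn

lemma integral_sq_sum_uncorr {Ω : Type*} [MeasurableSpace Ω] {μ : Measure Ω}
    (X : ℕ → Ω → ℝ) (hL2 : ∀ i, MemLp (X i) 2 μ)
    (horth : ∀ i j, i < j → ∫ ω, X i ω * X j ω ∂μ = 0)
    (C : ℝ) (hC : ∀ i, ∫ ω, (X i ω) ^ 2 ∂μ ≤ C) (n : ℕ) :
    ∫ ω, (∑ i ∈ Finset.range n, X i ω) ^ 2 ∂μ ≤ n * C := by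
  induction n with
  | zero => simp
  | succ n ih =>
    have hS : MemLp (fun ω => ∑ i ∈ Finset.range n, X i ω) 2 μ :=
      memLp_finsetSum _ (fun i _ => hL2 i)
    have hp : ∀ i, Integrable (fun ω => X i ω * X n ω) μ := fun i =>
      (hL2 i).integrable_mul (hL2 n)
    have hcross : ∫ ω, (∑ i ∈ Finset.range n, X i ω) * X n ω ∂μ = 0 := by
      simp_rw [Finset.sum_mul]
      rw [integral_finsetSum _ (fun i _ => hp i)]
      exact Finset.sum_eq_zero fun i hi => horth i n (Finset.mem_range.1 hi)
    have hci : Integrable (fun ω => (∑ i ∈ Finset.range n, X i ω) * X n ω) μ :=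
      hS.integrable_mul (hL2 n)
    have e : (fun ω => (∑ i ∈ Finset.range (n+1), X i ω) ^ 2) = fun ω =>
      ((∑ i ∈ Finset.range n, X i ω) ^ 2 + 2 * ((∑ i ∈ Finset.range n, X i ω) * X n ω))
        + (X n ω) ^ 2 := by
      ext ω; rw [Finset.sum_range_succ]; ring
    have hadd : Integrable (fun ω => (∑ i ∈ Finset.range n, X i ω) ^ 2 +
        2 * ((∑ i ∈ Finset.range n, X i ω) * X n ω)) μ :=
      hS.integrable_sq.add (hci.const_mul 2)
    rw [e, integral_add hadd (hL2 n).integrable_sq,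
      integral_add hS.integrable_sq (hci.const_mul 2), integral_const_mul, hcross]
    have := hC n
    push_cast
    linarith

lemma slln_uncorr {Ω : Type*} [MeasurableSpace Ω] {μ : Measure Ω}
    (X : ℕ → Ω → ℝ) (hL2 : ∀ i, MemLp (X i) 2 μ)
    (horth : ∀ i j, i < j → ∫ ω, X i ω * X j ω ∂μ = 0)
    (C : ℝ) (hC : ∀ i, ∫ ω, (X i ω) ^ 2 ∂μ ≤ C) :
    ∀ᵐ ω ∂μ, Tendsto (fun n : ℕ => (∑ i ∈ Finset.range n, X i ω) / n) atTop (𝓝 0) := by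
  have hC0 : 0 ≤ C := (integral_nonneg (fun ω => sq_nonneg (X 0 ω))).trans (hC 0)
  set Z : ℕ → Ω → ℝ := fun k ω => ((∑ i ∈ Finset.range (k ^ 2), X i ω) ^ 2 +
    (2 * k + 1) * ∑ i ∈ Finset.Ico (k ^ 2) ((k + 1) ^ 2), (X i ω) ^ 2) / (k : ℝ) ^ 4 with hZdef
  have hS : ∀ n, MemLp (fun ω => ∑ i ∈ Finset.range n, X i ω) 2 μ := fun n =>
      memLp_finsetSum _ (fun i _ => hL2 i)
  have hI2 : ∀ k : ℕ, Integrable (fun ω => (2 * (k:ℝ) + 1) *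
      ∑ i ∈ Finset.Ico (k ^ 2) ((k + 1) ^ 2), (X i ω) ^ 2) μ := fun k =>
    (integrable_finsetSum _ (fun i _ => (hL2 i).integrable_sq)).const_mul _
  have hcard : ∀ k : ℕ, (k + 1) ^ 2 - k ^ 2 = 2 * k + 1 := fun k => by
    have : (k + 1) ^ 2 = k ^ 2 + (2 * k + 1) := by ring
    omega
  have key := ae_tendsto_zero_of_summable_integral (μ := μ) Z
    (fun k => ((hS _).integrable_sq.add (hI2 k)).div_const _)
    (fun k ω => by positivity)
    (fun k => 10 * C * (1 / (k : ℝ) ^ 2)) ((Real.summable_one_div_nat_pow.2 (by norm_num)).mul_left _)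
    (fun k => by
      simp only [hZdef]
      rw [integral_div, integral_add (hS _).integrable_sq (hI2 k), integral_const_mul,
        integral_finsetSum _ (fun i _ => (hL2 i).integrable_sq)]
      have h1 := integral_sq_sum_uncorr X hL2 horth C hC (k ^ 2)
      have h2 : ∑ i ∈ Finset.Ico (k ^ 2) ((k + 1) ^ 2), ∫ ω, (X i ω) ^ 2 ∂μ ≤ (2 * k + 1) * C := by
        refine (Finset.sum_le_sum (fun i _ => hC i)).trans ?_
        simp [hcard]
      rcases Nat.eq_zero_or_pos k with rfl | hk
      · simp
      · have hk' : (1:ℝ) ≤ k := by exact_mod_cast hk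
        have h3 : (2 * (k:ℝ) + 1) * ∑ i ∈ Finset.Ico (k ^ 2) ((k + 1) ^ 2), ∫ ω, (X i ω) ^ 2 ∂μ
          ≤ (2 * k + 1) * ((2 * k + 1) * C) := by gcongr
        push_cast at h1
        have h4 : (2 * (k:ℝ) + 1) * ((2 * k + 1) * C) ≤ 9 * k ^ 2 * C := by
          have : (2 * (k:ℝ) + 1) * (2 * k + 1) ≤ 9 * k ^ 2 := by nlinarith
          nlinarith
        calc _ ≤ (10 * C * k ^ 2) / (k:ℝ) ^ 4 := by gcongr; linarith
          _ = _ := by field_simp)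
  filter_upwards [key] with ω hω
  have h1 := (hω.comp tendsto_nat_sqrt).const_mul 2
  rw [mul_zero] at h1
  have h2 : Tendsto (fun n : ℕ => ((∑ i ∈ Finset.range n, X i ω) / n) ^ 2) atTop (𝓝 0) := by
    refine squeeze_zero' (Eventually.of_forall fun n => sq_nonneg _) ?_ h1
    filter_upwards [eventually_ge_atTop 1] with n hn
    simp only [Function.comp, hZdef]
    set k := Nat.sqrt n with hk
    have hk1 : 1 ≤ k := Nat.le_sqrt'.2 (by simpa using hn)
    have hkn : k ^ 2 ≤ n := Nat.sqrt_le' n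
    have hkn2 : n < (k + 1) ^ 2 := Nat.lt_succ_sqrt' n
    have hsplit : ∑ i ∈ Finset.range n, X i ω = ∑ i ∈ Finset.range (k^2), X i ω +
      ∑ i ∈ Finset.Ico (k^2) n, X i ω := (Finset.sum_range_add_sum_Ico _ hkn).symm
    have hgap : (∑ i ∈ Finset.Ico (k^2) n, X i ω) ^ 2 ≤
        (2 * k + 1) * ∑ i ∈ Finset.Ico (k ^ 2) ((k + 1) ^ 2), (X i ω) ^ 2 := by
      refine sq_sum_le_card_mul_sum_sq.trans ?_
      gcongr
      · rw [Nat.card_Ico]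
        have : n - k ^ 2 ≤ 2 * k + 1 := by have := hcard k; omega
        exact_mod_cast this
    have hk0 : (0:ℝ) < k := by exact_mod_cast hk1
    have hkn' : (k:ℝ) ^ 4 ≤ (n:ℝ) ^ 2 := by
      have : (k:ℝ)^2 ≤ n := by exact_mod_cast hkn
      nlinarith [sq_nonneg (k:ℝ)]
    rw [div_pow, ← mul_div_assoc]
    gcongr
    rw [hsplit]
    nlinarith [sq_nonneg (∑ i ∈ Finset.range (k^2), X i ω - ∑ i ∈ Finset.Ico (k^2) n, X i ω)]
  have h3 := h2.sqrt
  simp only [Real.sqrt_sq_eq_abs, Real.sqrt_zero] at h3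
  exact (tendsto_zero_iff_abs_tendsto_zero _).2 h3

lemma integral_four_zero {Ω : Type*} [MeasurableSpace Ω] {μ : Measure Ω}
    {U : ℤ → Ω → ℝ} (hUmeas : ∀ j, Measurable (U j)) (hUindep : iIndepFun U μ)
    (hmean : ∀ j, ∫ ω, U j ω ∂μ = 0) {a b c p : ℤ} (ha : a ≠ p) (hb : b ≠ p) (hc : c ≠ p) :
    ∫ ω, (U a ω * U b ω * U c ω) * U p ω ∂μ = 0 := by
  have h := hUindep.indepFun_finset ({a, b, c} : Finset ℤ) ({p} : Finset ℤ)
    (by simp [ha.symm, hb.symm, hc.symm]) hUmeas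
  have h2 : IndepFun (fun ω => U a ω * U b ω * U c ω) (U p) μ := by
    have m1 : Measurable (fun v : (({a, b, c} : Finset ℤ) → ℝ) =>
        v ⟨a, by simp⟩ * v ⟨b, by simp⟩ * v ⟨c, by simp⟩) := by fun_prop
    have m2 : Measurable (fun v : (({p} : Finset ℤ) → ℝ) => v ⟨p, by simp⟩) :=
      measurable_pi_apply _
    have := h.comp m1 m2
    exact this
  rw [h2.integral_fun_mul_eq_mul_integral
    (((hUmeas a).mul (hUmeas b)).mul (hUmeas c)).aestronglyMeasurable
    (hUmeas p).aestronglyMeasurable, hmean, mul_zero]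

lemma slln_U {Ω : Type*} [MeasurableSpace Ω] (μ : Measure Ω)
    (U : ℤ → Ω → ℝ) (hUmeas : ∀ j, Measurable (U j))
    (hUindep : iIndepFun U μ)
    (hUident : ∀ j, μ.map (U j) = μ.map (U 0)) (f : ℝ → ℝ) (hf : Measurable f)
    (hint : Integrable (fun ω => f (U 0 ω)) μ) (τ : ℕ → ℤ) (hτ : Function.Injective τ) :
    ∀ᵐ ω ∂μ, Tendsto (fun n : ℕ => (∑ i ∈ Finset.range n, f (U (τ i) ω)) / n) atTop
      (𝓝 (∫ ω, f (U 0 ω) ∂μ)) := by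
  have hid : ∀ j k, IdentDistrib (fun ω => f (U j ω)) (fun ω => f (U k ω)) μ μ := fun j k =>
    IdentDistrib.comp (f := U j) (g := U k)
      ⟨(hUmeas j).aemeasurable, (hUmeas k).aemeasurable, by rw [hUident j, hUident k]⟩ hf
  have h := strong_law_ae_real (μ := μ) (fun i ω => f (U (τ i) ω))
    ((hid 0 (τ 0)).integrable_iff.1 hint)
    (fun i j hij => (hUindep.indepFun (hτ.ne hij)).comp hf hf)
    (fun i => hid _ _)
  rw [(hid 0 (τ 0)).integral_eq]
  exact h

lemma slln_prod {Ω : Type*} [MeasurableSpace Ω] (μ : Measure Ω) [IsProbabilityMeasure μ]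
    (U : ℤ → Ω → ℝ) (hUmeas : ∀ j, Measurable (U j))
    (hUindep : iIndepFun U μ)
    (hmean : ∀ j, ∫ ω, U j ω ∂μ = 0) (s : ℝ)
    (hint : ∀ j, Integrable (fun ω => (U j ω) ^ 2) μ)
    (hvar : ∀ j, ∫ ω, (U j ω) ^ 2 ∂μ = s) (j k : ℕ) (hjk : j < k) :
    ∀ᵐ ω ∂μ, Tendsto (fun n : ℕ => (∑ i ∈ Finset.range n,
      U ((i : ℤ) + 1 - (j : ℤ)) ω * U ((i : ℤ) + 1 - (k : ℤ)) ω) / n) atTop (𝓝 0) := by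
  have hind : ∀ i : ℕ, IndepFun (fun ω => (U ((i : ℤ) + 1 - (j : ℤ)) ω) ^ 2)
      (fun ω => (U ((i : ℤ) + 1 - (k : ℤ)) ω) ^ 2) μ := fun i =>
    (hUindep.indepFun (i := (i : ℤ) + 1 - (j : ℤ)) (j := (i : ℤ) + 1 - (k : ℤ)) (by omega)).comp
      (φ := fun x => x ^ 2) (ψ := fun x => x ^ 2) (by fun_prop) (by fun_prop)
  refine slln_uncorr (fun (i : ℕ) ω =>
    U ((i : ℤ) + 1 - (j : ℤ)) ω * U ((i : ℤ) + 1 - (k : ℤ)) ω) ?_ ?_ (s * s) ?_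
  · intro i
    refine (memLp_two_iff_integrable_sq ((hUmeas _).mul (hUmeas _)).aestronglyMeasurable).2 ?_
    refine ((hind i).integrable_mul (hint _) (hint _)).congr (ae_of_all _ fun ω => ?_)
    simp [mul_pow]
  · intro i l hil
    rw [← integral_four_zero (μ := μ) hUmeas hUindep hmean (a := (i : ℤ) + 1 - (j : ℤ))
      (b := (i : ℤ) + 1 - (k : ℤ)) (c := (l : ℤ) + 1 - (k : ℤ)) (p := (l : ℤ) + 1 - (j : ℤ))
      (by omega) (by omega) (by omega)]
    congr 1; ext ω; ring
  · intro i
    simp_rw [mul_pow]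
    rw [(hind i).integral_fun_mul_eq_mul_integral ((hUmeas _).pow_const 2).aestronglyMeasurable
      ((hUmeas _).pow_const 2).aestronglyMeasurable, hvar, hvar]

lemma bound_of_avg (a : ℕ → ℝ) (c : ℝ)
    (h : Tendsto (fun n : ℕ => (∑ i ∈ Finset.range n, a i) / n) atTop (𝓝 c)) :
    ∃ C, ∀ n : ℕ, ∑ i ∈ Finset.range n, a i ≤ C * n := by
  obtain ⟨C, hC⟩ := h.bddAbove_range
  refine ⟨C, fun n => ?_⟩
  rcases Nat.eq_zero_or_pos n with rfl | hn
  · simp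
  · have := hC ⟨n, rfl⟩
    exact (div_le_iff₀ (by exact_mod_cast hn)).1 this

lemma noise_ae {Ω : Type*} [MeasurableSpace Ω] (μ : Measure Ω) [IsProbabilityMeasure μ]
    (U : ℤ → Ω → ℝ) (hUmeas : ∀ j, Measurable (U j))
    (hUindep : iIndepFun U μ)
    (hUident : ∀ j, μ.map (U j) = μ.map (U 0)) (σ : ℝ) (hσ : 0 < σ)
    (hUmean : ∫ ω, U 0 ω ∂μ = 0)
    (hUvar : ∫ ω, (U 0 ω) ^ 2 ∂μ = σ ^ 2) :
    ∀ᵐ ω ∂μ, (∀ j : ℕ, Tendsto (fun n : ℕ => (∑ i ∈ Finset.range n,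
        U ((i : ℤ) + 1 - (j : ℤ)) ω) / n) atTop (𝓝 0)) ∧
      (∀ j k : ℕ, Tendsto (fun n : ℕ => (∑ i ∈ Finset.range n,
        U ((i : ℤ) + 1 - (j : ℤ)) ω * U ((i : ℤ) + 1 - (k : ℤ)) ω) / n) atTop
          (𝓝 (if j = k then σ ^ 2 else 0))) ∧
      (∃ C, 0 ≤ C ∧ ∀ n j : ℕ, ∑ i ∈ Finset.range n, (U ((i : ℤ) + 1 - (j : ℤ)) ω) ^ 2
        ≤ C * (n + j)) := by
  have hid : ∀ j, IdentDistrib (U j) (U 0) μ μ := fun j =>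
    ⟨(hUmeas j).aemeasurable, (hUmeas 0).aemeasurable, hUident j⟩
  have hint0 : Integrable (fun ω => (U 0 ω) ^ 2) μ := by
    by_contra h
    rw [integral_undef h] at hUvar
    have : 0 < σ ^ 2 := by positivity
    linarith
  have hid2 : ∀ j, IdentDistrib (fun ω => (U j ω) ^ 2) (fun ω => (U 0 ω) ^ 2) μ μ := fun j =>
    (hid j).comp (u := fun x => x ^ 2) (by fun_prop)
  have hint : ∀ j, Integrable (fun ω => (U j ω) ^ 2) μ := fun j =>
    (hid2 j).integrable_iff.2 hint0
  have hvar : ∀ j, ∫ ω, (U j ω) ^ 2 ∂μ = σ ^ 2 := fun j => by rw [(hid2 j).integral_eq, hUvar]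
  have hmean : ∀ j, ∫ ω, U j ω ∂μ = 0 := fun j => by rw [(hid j).integral_eq, hUmean]
  have hint1 : Integrable (U 0) μ :=
    ((memLp_two_iff_integrable_sq (hUmeas 0).aestronglyMeasurable).2 hint0).integrable
      (by norm_num)
  have A1 : ∀ᵐ ω ∂μ, ∀ j : ℕ, Tendsto (fun n : ℕ => (∑ i ∈ Finset.range n,
        U ((i : ℤ) + 1 - (j : ℤ)) ω) / n) atTop (𝓝 0) := by
    refine ae_all_iff.2 fun j => ?_
    have := slln_U μ U hUmeas hUindep hUident id measurable_id hint1
      (fun i => (i : ℤ) + 1 - (j : ℤ)) (fun a b h => by simpa using h)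
    simpa [hUmean] using this
  have A2 : ∀ᵐ ω ∂μ, ∀ j : ℕ, Tendsto (fun n : ℕ => (∑ i ∈ Finset.range n,
        (U ((i : ℤ) + 1 - (j : ℤ)) ω) ^ 2) / n) atTop (𝓝 (σ ^ 2)) := by
    refine ae_all_iff.2 fun j => ?_
    have := slln_U μ U hUmeas hUindep hUident (fun x => x ^ 2) (by fun_prop) hint0
      (fun i => (i : ℤ) + 1 - (j : ℤ)) (fun a b h => by simpa using h)
    simpa [hUvar] using this
  have A3 : ∀ᵐ ω ∂μ, Tendsto (fun n : ℕ => (∑ i ∈ Finset.range n,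
        (U (-(i : ℤ)) ω) ^ 2) / n) atTop (𝓝 (σ ^ 2)) := by
    have := slln_U μ U hUmeas hUindep hUident (fun x => x ^ 2) (by fun_prop) hint0
      (fun i => -(i : ℤ)) (fun a b h => by simpa using h)
    simpa [hUvar] using this
  have A4 : ∀ᵐ ω ∂μ, ∀ j k : ℕ, j < k → Tendsto (fun n : ℕ => (∑ i ∈ Finset.range n,
        U ((i : ℤ) + 1 - (j : ℤ)) ω * U ((i : ℤ) + 1 - (k : ℤ)) ω) / n) atTop (𝓝 0) := by
    refine ae_all_iff.2 fun j => ae_all_iff.2 fun k => ?_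
    by_cases hjk : j < k
    · filter_upwards [slln_prod μ U hUmeas hUindep hmean _ hint hvar j k hjk] with ω h _ using h
    · exact ae_of_all _ fun ω h => absurd h hjk
  filter_upwards [A1, A2, A3, A4] with ω h1 h2 h3 h4
  refine ⟨h1, ?_, ?_⟩
  · intro j k
    rcases lt_trichotomy j k with h | h | h
    · simpa [h.ne] using h4 j k h
    · subst h; simpa [pow_two] using h2 j
    · simpa [h.ne', mul_comm] using h4 k j h
  · obtain ⟨C1, hC1⟩ := bound_of_avg _ _ (h2 0)
    obtain ⟨C2, hC2⟩ := bound_of_avg _ _ h3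
    have c1 : 0 ≤ C1 := by
      have := (Finset.sum_nonneg (s := Finset.range 1) (fun i _ => sq_nonneg
        (U ((i : ℤ) + 1 - ((0:ℕ) : ℤ)) ω))).trans (hC1 1)
      simpa using this
    have c2 : 0 ≤ C2 := by
      have := (Finset.sum_nonneg (s := Finset.range 1) (fun i _ => sq_nonneg
        (U (-(i : ℤ)) ω))).trans (hC2 1)
      simpa using this
    refine ⟨C1 + C2, by positivity, fun n j => ?_⟩
    -- claim by induction on j
    have key : ∀ j : ℕ, ∑ i ∈ Finset.range n, (U ((i : ℤ) + 1 - (j : ℤ)) ω) ^ 2 ≤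
        ∑ i ∈ Finset.range n, (U ((i : ℤ) + 1 - ((0 : ℕ) : ℤ)) ω) ^ 2 +
        ∑ i ∈ Finset.range j, (U (-(i : ℤ)) ω) ^ 2 := by
      intro j
      induction j with
      | zero => simp
      | succ j ih =>
        rw [Finset.sum_range_succ _ j]
        have : ∑ i ∈ Finset.range n, (U ((i : ℤ) + 1 - ((j + 1 : ℕ) : ℤ)) ω) ^ 2 ≤
          ∑ i ∈ Finset.range n, (U ((i : ℤ) + 1 - (j : ℤ)) ω) ^ 2 + (U (-(j : ℤ)) ω) ^ 2 := by
          have e := Finset.sum_range_succ' (fun i : ℕ => (U ((i : ℤ) - (j : ℤ)) ω) ^ 2) n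
          have e' := Finset.sum_range_succ (fun i : ℕ => (U ((i : ℤ) - (j : ℤ)) ω) ^ 2) n
          push_cast at e e' ⊢
          simp only [zero_sub, add_sub_add_right_eq_sub] at e ⊢
          rw [← e, e']
          nlinarith [sq_nonneg (U ((n : ℤ) - (j : ℤ)) ω)]
        linarith
    have := key j
    have b1 := hC1 n
    have b2 := hC2 j
    have : 0 ≤ C1 * j := by positivity
    have : 0 ≤ C2 * n := by positivity
    linarith

lemma noise_avg (u e : ℤ → ℝ) (φ s C : ℝ) (hφ1 : |φ| < 1) (hC : 0 ≤ C)
    (hsum : ∀ i : ℤ, HasSum (fun j : ℕ => φ ^ j * u (i - (j : ℤ))) (e i))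
    (h1 : ∀ j : ℕ, Tendsto (fun n : ℕ => (∑ i ∈ Finset.range n,
        u ((i : ℤ) + 1 - (j : ℤ))) / n) atTop (𝓝 0))
    (h2 : ∀ j k : ℕ, Tendsto (fun n : ℕ => (∑ i ∈ Finset.range n,
        u ((i : ℤ) + 1 - (j : ℤ)) * u ((i : ℤ) + 1 - (k : ℤ))) / n) atTop
          (𝓝 (if j = k then s else 0)))
    (h3 : ∀ n j : ℕ, ∑ i ∈ Finset.range n, (u ((i : ℤ) + 1 - (j : ℤ))) ^ 2 ≤ C * (n + j)) :
    Tendsto (fun n : ℕ => (∑ i ∈ Finset.range n, e ((i : ℤ) + 1)) / n) atTop (𝓝 0) ∧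
    Tendsto (fun n : ℕ => (∑ i ∈ Finset.range n, (e ((i : ℤ) + 1)) ^ 2) / n) atTop
      (𝓝 (s / (1 - φ ^ 2))) := by
  have hs0 : Summable (fun j : ℕ => |φ| ^ j) := summable_geometric_of_lt_one (abs_nonneg _) hφ1
  have hs1 : Summable (fun j : ℕ => (j : ℝ) * |φ| ^ j) := by
    simpa using summable_pow_mul_geometric_of_norm_lt_one 1 (r := |φ|) (by simpa using hφ1)
  have hs2 : Summable (fun j : ℕ => |φ| ^ j * (1 + j : ℝ)) := by
    refine (hs0.add hs1).congr fun j => by ring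
  have h3' : ∀ n j : ℕ, 1 ≤ n →
      (∑ i ∈ Finset.range n, (u ((i : ℤ) + 1 - (j : ℤ))) ^ 2) / n ≤ C * (1 + j) := by
    intro n j hn
    have hn' : (1:ℝ) ≤ n := by exact_mod_cast hn
    rw [div_le_iff₀ (by linarith)]
    refine (h3 n j).trans ?_
    have : (j:ℝ) ≤ j * n := le_mul_of_one_le_right (by positivity) hn'
    nlinarith
  constructor
  · have hb : Summable (fun j : ℕ => |φ| ^ j * (1 + C * (1 + j))) := by
      refine (hs0.add (hs2.mul_left C)).congr fun j => by ring
    have T := tendsto_tsum_of_dominated_convergence (𝓕 := atTop)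
      (f := fun (n : ℕ) (j : ℕ) => φ ^ j * ((∑ i ∈ Finset.range n,
        u ((i : ℤ) + 1 - (j : ℤ))) / n)) (g := fun j => φ ^ j * 0) hb
      (fun j => (h1 j).const_mul _) (by
        filter_upwards [eventually_ge_atTop 1] with n hn j
        have hn' : (1:ℝ) ≤ n := by exact_mod_cast hn
        rw [norm_mul, norm_pow, Real.norm_eq_abs, Real.norm_eq_abs]
        gcongr
        rw [abs_div, Nat.abs_cast]
        refine le_trans ?_ (add_le_add_right (h3' n j hn) 1)
        rw [div_le_iff₀ (by linarith), add_mul, div_mul_cancel₀ _ (by linarith)]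
        calc _ ≤ ∑ i ∈ Finset.range n, |u ((i : ℤ) + 1 - (j : ℤ))| :=
              Finset.abs_sum_le_sum_abs _ _
          _ ≤ ∑ i ∈ Finset.range n, (1 + (u ((i : ℤ) + 1 - (j : ℤ))) ^ 2) := by
              refine Finset.sum_le_sum fun i _ => ?_
              rw [← sq_abs]; nlinarith [sq_nonneg (|u ((i : ℤ) + 1 - (j : ℤ))| - 1)]
          _ = _ := by rw [Finset.sum_add_distrib]; simp)
    simp only [mul_zero, tsum_zero] at T
    refine T.congr fun n => ?_
    have := (hasSum_sum (s := Finset.range n) (fun i _ => hsum ((i : ℤ) + 1))).div_const (n : ℝ)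
    rw [← this.tsum_eq]
    congr 1; ext j
    rw [← Finset.mul_sum, mul_div_assoc]
  · have hb : Summable (fun p : ℕ × ℕ => C * ((|φ| ^ p.1 * (1 + p.1)) * (|φ| ^ p.2 * (1 + p.2)))) :=
      (hs2.mul_of_nonneg hs2 (fun j => by positivity) (fun j => by positivity)).mul_left C
    have T := tendsto_tsum_of_dominated_convergence (𝓕 := atTop)
      (f := fun (n : ℕ) (p : ℕ × ℕ) => φ ^ p.1 * φ ^ p.2 * ((∑ i ∈ Finset.range n,
        u ((i : ℤ) + 1 - (p.1 : ℤ)) * u ((i : ℤ) + 1 - (p.2 : ℤ))) / n))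
      (g := fun p => φ ^ p.1 * φ ^ p.2 * (if p.1 = p.2 then s else 0)) hb
      (fun p => (h2 p.1 p.2).const_mul _) (by
        filter_upwards [eventually_ge_atTop 1] with n hn
        rintro ⟨j, k⟩
        have hn' : (1:ℝ) ≤ n := by exact_mod_cast hn
        have hx : |(∑ i ∈ Finset.range n,
            u ((i : ℤ) + 1 - (j : ℤ)) * u ((i : ℤ) + 1 - (k : ℤ))) / n| ≤
            C * ((1 + j) * (1 + k)) := by
          have a1 : |(∑ i ∈ Finset.range n,
            u ((i : ℤ) + 1 - (j : ℤ)) * u ((i : ℤ) + 1 - (k : ℤ))) / n| ≤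
            ((∑ i ∈ Finset.range n, (u ((i : ℤ) + 1 - (j : ℤ))) ^ 2) / n +
            (∑ i ∈ Finset.range n, (u ((i : ℤ) + 1 - (k : ℤ))) ^ 2) / n) / 2 := by
            rw [abs_div, Nat.abs_cast, ← add_div, div_right_comm]
            gcongr
            rw [← Finset.sum_add_distrib, Finset.sum_div]
            refine (Finset.abs_sum_le_sum_abs _ _).trans (Finset.sum_le_sum fun i _ => ?_)
            rw [abs_mul, ← sq_abs (u ((i : ℤ) + 1 - (j : ℤ))), ← sq_abs (u ((i : ℤ) + 1 - (k : ℤ)))]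
            nlinarith [sq_nonneg (|u ((i : ℤ) + 1 - (j : ℤ))| - |u ((i : ℤ) + 1 - (k : ℤ))|)]
          have a2 := h3' n j hn
          have a3 := h3' n k hn
          have hj : (0:ℝ) ≤ j := by positivity
          have hk : (0:ℝ) ≤ k := by positivity
          have : C * ((1 + (j:ℝ)) + (1 + k)) / 2 ≤ C * ((1 + j) * (1 + k)) := by
            rw [mul_div_assoc]
            gcongr
            nlinarith [mul_nonneg hj hk]
          linarith
        simp only [norm_mul, norm_pow, Real.norm_eq_abs]
        calc _ ≤ |φ| ^ j * |φ| ^ k * (C * ((1 + j) * (1 + k))) := by gcongr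
          _ = _ := by ring)
    have hlim : HasSum (fun p : ℕ × ℕ => φ ^ p.1 * φ ^ p.2 * (if p.1 = p.2 then s else 0))
        (s / (1 - φ ^ 2)) := by
      have hinj : Function.Injective (fun j : ℕ => (j, j)) := fun a b h => by simpa using h
      rw [← hinj.hasSum_iff]
      · have hφ2 : |φ ^ 2| < 1 := by
          rw [abs_pow]; exact pow_lt_one₀ (abs_nonneg _) hφ1 (by norm_num)
        have := (hasSum_geometric_of_abs_lt_one hφ2).mul_left s
        rw [div_eq_mul_inv]
        refine this.congr_fun ?_
        intro j
        simp [← pow_mul, ← pow_add]; ring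
      · rintro ⟨j, k⟩ hp
        have : j ≠ k := fun h => hp ⟨j, by simp [h]⟩
        simp [this]
    rw [hlim.tsum_eq] at T
    refine T.congr fun n => ?_
    have hsq : ∀ i : ℤ, HasSum (fun p : ℕ × ℕ => (φ ^ p.1 * u (i - (p.1 : ℤ))) *
        (φ ^ p.2 * u (i - (p.2 : ℤ)))) (e i ^ 2) := by
      intro i
      rw [pow_two]
      exact (hsum i).mul (hsum i)
        (summable_mul_of_summable_norm (hsum i).summable.norm (hsum i).summable.norm)
    have := (hasSum_sum (s := Finset.range n) (fun i _ => hsq ((i : ℤ) + 1))).div_const (n : ℝ)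
    rw [← this.tsum_eq]
    congr 1; ext p
    rw [← mul_div_assoc, Finset.mul_sum]
    congr 1
    exact Finset.sum_congr rfl fun i _ => by ring

lemma max_partial_sum (S : ℕ → ℝ)
    (h : Tendsto (fun n : ℕ => S n / n) atTop (𝓝 0)) (θ : ℝ) (hθ : 0 < θ) :
    ∃ N : ℕ, ∀ n ≥ N, ∀ j ≤ n, |S j| ≤ θ * n := by
  obtain ⟨N0, hN0⟩ := Metric.tendsto_atTop.1 h θ hθ
  obtain ⟨N1, hN1⟩ := exists_nat_ge ((∑ j ∈ Finset.range (N0 + 1), |S j|) / θ)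
  refine ⟨N1, fun n hn j hj => ?_⟩
  by_cases hjN : j < N0 + 1
  · have a1 : |S j| ≤ ∑ j ∈ Finset.range (N0 + 1), |S j| :=
      Finset.single_le_sum (f := fun j => |S j|) (fun i _ => abs_nonneg _) (Finset.mem_range.2 hjN)
    have a2 : (N1 : ℝ) ≤ n := by exact_mod_cast hn
    have := (div_le_iff₀ hθ).1 (hN1.trans a2)
    linarith
  · have := hN0 j (by omega)
    have hj0 : (0:ℝ) < j := by exact_mod_cast (by omega : 0 < j)
    rw [Real.dist_eq, sub_zero, abs_div, Nat.abs_cast, div_lt_iff₀ hj0] at this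
    have a2 : (j : ℝ) ≤ n := by exact_mod_cast hj
    nlinarith

/-- block bound; `a i`, `e i` with `i` in `range n` -/
lemma block_bound (n K : ℕ) (hK : 1 ≤ K) (a e : ℕ → ℝ) (B η D : ℝ) (hB : 0 ≤ B)
    (ha : ∀ i ≤ n, |a i| ≤ B)
    (hosc : ∀ i ≤ n, ∀ l ≤ n, i ≤ l → l ≤ i + (n / K + 1) → |a i - a l| ≤ η)
    (hD : ∀ j ≤ n, |∑ i ∈ Finset.range j, e i| ≤ D) :
    |∑ i ∈ Finset.range n, a i * e i| ≤ η * ∑ i ∈ Finset.range n, |e i| + K * (B * (2 * D)) := by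
  have key : ∀ k ≤ K, |∑ i ∈ Finset.range (k * n / K), a i * e i| ≤
      η * ∑ i ∈ Finset.range (k * n / K), |e i| + k * (B * (2 * D)) := by
    intro k
    induction k with
    | zero => simp
    | succ k ih =>
      intro hk
      have ih := ih (by omega)
      set t := k * n / K with ht
      set t' := (k + 1) * n / K with ht'
      have htt : t ≤ t' := Nat.div_le_div_right (by gcongr; omega)
      have ht'n : t' ≤ n := Nat.div_le_of_le_mul (by gcongr)
      have hgap : t' ≤ t + (n / K + 1) := by
        have : (k + 1) * n = k * n + n := by ring
        rw [ht', ht, this]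
        have h1 := Nat.add_div (a := k * n) (b := n) (c := K) (by omega)
        rw [h1]; split_ifs <;> omega
      rw [← Finset.sum_range_add_sum_Ico _ htt, ← Finset.sum_range_add_sum_Ico (fun i => |e i|) htt]
      have hdec : ∑ i ∈ Finset.Ico t t', a i * e i = ∑ i ∈ Finset.Ico t t', (a i - a t') * e i +
          a t' * (∑ i ∈ Finset.range t', e i - ∑ i ∈ Finset.range t, e i) := by
        rw [← Finset.sum_range_add_sum_Ico e htt, add_sub_cancel_left, Finset.mul_sum,
          ← Finset.sum_add_distrib]
        exact Finset.sum_congr rfl fun i _ => by ring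
      have b1 : |∑ i ∈ Finset.Ico t t', (a i - a t') * e i| ≤ η * ∑ i ∈ Finset.Ico t t', |e i| := by
        rw [Finset.mul_sum]
        refine (Finset.abs_sum_le_sum_abs _ _).trans (Finset.sum_le_sum fun i hi => ?_)
        rw [Finset.mem_Ico] at hi
        rw [abs_mul]
        gcongr
        exact hosc i (by omega) t' ht'n (by omega) (by omega)
      have b2 : |a t' * (∑ i ∈ Finset.range t', e i - ∑ i ∈ Finset.range t, e i)| ≤
          B * (2 * D) := by
        rw [abs_mul]
        have := abs_sub (∑ i ∈ Finset.range t', e i) (∑ i ∈ Finset.range t, e i)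
        have := hD t' ht'n
        have := hD t (by omega)
        exact mul_le_mul (ha _ ht'n) (by linarith) (abs_nonneg _) hB
      rw [hdec]
      have c1 := abs_add_le (∑ i ∈ Finset.range t, a i * e i)
        (∑ i ∈ Finset.Ico t t', (a i - a t') * e i +
          a t' * (∑ i ∈ Finset.range t', e i - ∑ i ∈ Finset.range t, e i))
      have c2 := abs_add_le (∑ i ∈ Finset.Ico t t', (a i - a t') * e i)
        (a t' * (∑ i ∈ Finset.range t', e i - ∑ i ∈ Finset.range t, e i))
      push_cast
      linarith
  have := key K le_rfl
  rwa [Nat.mul_div_cancel_left _ (by omega)] at this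

lemma riemann_bound (Δ : ℝ) (hΔ : 0 < Δ) (F : ℝ → ℝ) (hF : ContinuousOn F (Icc 0 Δ)) (η : ℝ)
    (n : ℕ) (hn : 1 ≤ n)
    (hosc : ∀ w ∈ Icc 0 Δ, ∀ w' ∈ Icc 0 Δ, |w - w'| ≤ Δ / n → |F w - F w'| ≤ η) :
    |(∑ i ∈ Finset.range n, F (((i : ℝ) + 1) * Δ / n)) / n - (1 / Δ) * ∫ w in (0 : ℝ)..Δ, F w|
      ≤ η := by
  have hn0 : (0:ℝ) < n := by exact_mod_cast hn
  set d : ℕ → ℝ := fun i => (i : ℝ) * Δ / n with hd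
  have hd0 : d 0 = 0 := by simp [hd]
  have hdn : d n = Δ := by simp only [hd]; field_simp
  have hstep : ∀ i, d (i + 1) - d i = Δ / n := fun i => by simp only [hd]; push_cast; field_simp; ring
  have hmem : ∀ i ≤ n, d i ∈ Icc 0 Δ := fun i hi => by
    refine ⟨by positivity, ?_⟩
    simp only [hd]
    rw [div_le_iff₀ hn0, mul_comm]
    have : (i:ℝ) ≤ n := by exact_mod_cast hi
    gcongr
  have hle : ∀ i, d i ≤ d (i + 1) := fun i => by
    have := hstep i; have : 0 < Δ / n := by positivity
    linarith
  have hsub : ∀ i < n, Icc (d i) (d (i + 1)) ⊆ Icc 0 Δ := fun i hi =>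
    Icc_subset_Icc (hmem i hi.le).1 (hmem (i+1) hi).2
  have hii : ∀ i < n, IntervalIntegrable F volume (d i) (d (i + 1)) := fun i hi =>
    (hF.mono ((uIcc_of_le (hle i)).symm ▸ hsub i hi)).intervalIntegrable
  have hI := intervalIntegral.sum_integral_adjacent_intervals hii
  rw [hd0, hdn] at hI
  rw [← hI]
  have e1 : (∑ i ∈ Finset.range n, F (((i : ℝ) + 1) * Δ / n)) / n -
      (1 / Δ) * ∑ i ∈ Finset.range n, ∫ w in d i..d (i + 1), F w =
      (1 / Δ) * ∑ i ∈ Finset.range n, ∫ w in d i..d (i + 1), (F (d (i + 1)) - F w) := by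
    rw [Finset.mul_sum, Finset.mul_sum, Finset.sum_div, ← Finset.sum_sub_distrib]
    refine Finset.sum_congr rfl fun i hi => ?_
    rw [intervalIntegral.integral_sub (by simp) (hii i (Finset.mem_range.1 hi)),
      intervalIntegral.integral_const, hstep]
    simp only [hd]
    push_cast
    rw [smul_eq_mul]
    field_simp
  rw [e1, abs_mul, abs_of_pos (by positivity : 0 < 1 / Δ)]
  have e2 : |∑ i ∈ Finset.range n, ∫ w in d i..d (i + 1), (F (d (i + 1)) - F w)| ≤
      ∑ i ∈ Finset.range n, η * (Δ / n) := by
    refine (Finset.abs_sum_le_sum_abs _ _).trans (Finset.sum_le_sum fun i hi => ?_)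
    have hi := Finset.mem_range.1 hi
    have := intervalIntegral.norm_integral_le_of_norm_le_const (a := d i) (b := d (i + 1))
      (C := η) (f := fun w => F (d (i + 1)) - F w) (fun w hw => by
        rw [uIoc_of_le (hle i)] at hw
        refine hosc _ (hmem _ hi) _ (hsub i hi ⟨hw.1.le, hw.2⟩) ?_
        have := hstep i
        rw [abs_of_nonneg (by linarith [hw.2])]
        linarith [hw.1])
    rwa [hstep, abs_of_pos (by positivity : 0 < Δ / n)] at this
  rw [Finset.sum_const, Finset.card_range, nsmul_eq_mul] at e2
  calc _ ≤ 1 / Δ * (n * (η * (Δ / n))) := by gcongr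
    _ = η := by field_simp

lemma abs_log_sub_le {m a b : ℝ} (hm : 0 < m) (ha : m ≤ a) (hb : m ≤ b) :
    |Real.log a - Real.log b| ≤ |a - b| / m := by
  have key : ∀ a b : ℝ, m ≤ a → m ≤ b → Real.log a - Real.log b ≤ |a - b| / m := by
    intro a b ha hb
    have ha0 := hm.trans_le ha
    have hb0 := hm.trans_le hb
    rw [← Real.log_div ha0.ne' hb0.ne']
    have h1 := Real.log_le_sub_one_of_pos (div_pos ha0 hb0)
    have h2 : a / b - 1 = (a - b) / b := by field_simp
    rw [h2] at h1
    refine h1.trans ?_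
    calc (a - b) / b ≤ |a - b| / b := by gcongr; exact le_abs_self _
      _ ≤ _ := by gcongr
  rw [abs_le]
  have h1 := key a b ha hb
  have h2 := key b a hb ha
  rw [abs_sub_comm] at h2
  constructor <;> linarith

/-- uniform bound and equicontinuity of the family -/
lemma family_props (Δ A xm xM : ℝ) (hxm : 0 < xm) (hxM : 0 < xM)
    (x z : ℝ → ℝ)
    (hxcont : ContinuousOn x (Icc 0 Δ))
    (hxrange : ∀ w ∈ Icc (0 : ℝ) Δ, x w ∈ Ioo (-xm) xM)
    (hzcont : ContinuousOn z (Icc 0 Δ))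
    (hzrange : ∀ w ∈ Icc (0 : ℝ) Δ, z w ∈ Icc 0 A)
    (γ₀ : ℝ) (hγ₀ : γ₀ ∈ Icc (-(1 / xM)) (1 / xm))
    (m M L : ℝ) (hm : 0 < m) (hL : 0 < L)
    (g₀ : ℝ → ℝ) (hg₀ : inG A m M L g₀) :
    ∃ B : ℝ, 0 ≤ B ∧ (∀ γ ∈ Icc (-(1 / xM)) (1 / xm), ∀ g : ℝ → ℝ, inG A m M L g →
      ∀ w ∈ Icc 0 Δ, |Real.log (1 + γ₀ * x w) - Real.log (1 + γ * x w) +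
      Real.log (g₀ (z w)) - Real.log (g (z w))| ≤ B) ∧
    ∀ η > 0, ∃ δ > 0, ∀ γ ∈ Icc (-(1 / xM)) (1 / xm), ∀ g : ℝ → ℝ, inG A m M L g →
      ∀ w ∈ Icc 0 Δ, ∀ w' ∈ Icc 0 Δ, |w - w'| < δ →
      |(Real.log (1 + γ₀ * x w) - Real.log (1 + γ * x w) +
      Real.log (g₀ (z w)) - Real.log (g (z w))) - (Real.log (1 + γ₀ * x w') -
        Real.log (1 + γ * x w') + Real.log (g₀ (z w')) - Real.log (g (z w')))| ≤ η := by
  have hpos : ∀ γ ∈ Icc (-(1 / xM)) (1 / xm), ∀ w ∈ Icc 0 Δ, 0 < 1 + γ * x w := by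
    intro γ hγ w hw
    obtain ⟨h1, h2⟩ := hxrange w hw
    obtain ⟨h3, h4⟩ := hγ
    have h3' : -1 ≤ γ * xM := by
      have := mul_le_mul_of_nonneg_right h3 hxM.le
      rwa [neg_mul, one_div_mul_cancel hxM.ne'] at this
    have h4' : γ * xm ≤ 1 := by
      have := mul_le_mul_of_nonneg_right h4 hxm.le
      rwa [one_div_mul_cancel hxm.ne'] at this
    rcases lt_trichotomy γ 0 with h | h | h
    · nlinarith
    · simp [h]
    · nlinarith
  set P : Set (ℝ × ℝ) := Icc (-(1 / xM)) (1 / xm) ×ˢ Icc 0 Δ with hP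
  have hPc : IsCompact P := isCompact_Icc.prod isCompact_Icc
  have hlc : ContinuousOn (fun p : ℝ × ℝ => Real.log (1 + p.1 * x p.2)) P := by
    refine ContinuousOn.log ?_ (fun p hp => (hpos _ hp.1 _ hp.2).ne')
    exact continuousOn_const.add (continuousOn_fst.mul (hxcont.comp continuousOn_snd
      (fun p hp => hp.2)))
  obtain ⟨B1, hB1⟩ := hPc.exists_bound_of_continuousOn hlc
  have hgb : ∀ g : ℝ → ℝ, inG A m M L g → ∀ w ∈ Icc 0 Δ,
      |Real.log (g (z w))| ≤ max |Real.log m| |Real.log M| := by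
    intro g hg w hw
    obtain ⟨h1, h2⟩ := hg.2.2.1 _ (hzrange w hw)
    exact abs_le_max_abs_abs (Real.log_le_log hm h1) (Real.log_le_log (hm.trans_le h1) h2)
  refine ⟨2 * |B1| + 2 * max |Real.log m| |Real.log M|, by positivity, ?_, ?_⟩
  · intro γ hγ g hg w hw
    have a1 := (hB1 (γ₀, w) ⟨hγ₀, hw⟩).trans (le_abs_self _)
    have a2 := (hB1 (γ, w) ⟨hγ, hw⟩).trans (le_abs_self _)
    have a3 := hgb g hg w hw
    have a4 := hgb g₀ hg₀ w hw
    simp only [Real.norm_eq_abs] at a1 a2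
    rw [abs_le] at *
    constructor <;> linarith
  · intro η hη
    have hu := Metric.uniformContinuousOn_iff.1 (hPc.uniformContinuousOn_of_continuous hlc)
      (η / 4) (by positivity)
    obtain ⟨δ1, hδ1, hu⟩ := hu
    obtain ⟨δ2, hδ2, hz⟩ := Metric.uniformContinuousOn_iff.1
      (isCompact_Icc.uniformContinuousOn_of_continuous hzcont) (η / 4 * m / L) (by positivity)
    refine ⟨min δ1 δ2, lt_min hδ1 hδ2, ?_⟩
    intro γ hγ g hg w hw w' hw' hww
    have b : ∀ γ ∈ Icc (-(1 / xM)) (1 / xm),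
        |Real.log (1 + γ * x w) - Real.log (1 + γ * x w')| ≤ η / 4 := by
      intro γ hγ
      have := hu (γ, w) ⟨hγ, hw⟩ (γ, w') ⟨hγ, hw'⟩ (by
        rw [Prod.dist_eq, dist_self, Real.dist_eq]
        exact max_lt hδ1 (hww.trans_le (min_le_left _ _)))
      exact this.le
    have c : ∀ g : ℝ → ℝ, inG A m M L g →
        |Real.log (g (z w)) - Real.log (g (z w'))| ≤ η / 4 := by
      intro g hg
      have h1 := abs_log_sub_le hm (hg.2.2.1 _ (hzrange w hw)).1 (hg.2.2.1 _ (hzrange w' hw')).1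
      have h2 := hg.2.2.2.dist_le_mul _ (hzrange w hw) _ (hzrange w' hw')
      have h3 := (hz w hw w' hw' (hww.trans_le (min_le_right _ _))).le
      rw [Real.coe_toNNReal _ hL.le, Real.dist_eq] at h2
      refine h1.trans ?_
      rw [div_le_iff₀ hm]
      refine h2.trans ?_
      calc L * dist (z w) (z w') ≤ L * (η / 4 * m / L) := by gcongr
        _ = _ := by field_simp
    have b1 := b γ₀ hγ₀
    have b2 := b γ hγ
    have c1 := c g hg
    have c2 := c g₀ hg₀
    rw [abs_le] at *
    constructor <;> linarith

lemma sum_Icc_one (n : ℕ) (f : ℕ → ℝ) :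
    ∑ i ∈ Finset.Icc 1 n, f i = ∑ i ∈ Finset.range n, f (i + 1) := by
  rw [Finset.range_eq_Ico, Finset.sum_Ico_add' f 0 n 1]
  rfl

/-- deterministic part -/
lemma determ (Δ : ℝ) (hΔ : 0 < Δ) (e : ℕ → ℝ) (v B : ℝ) (hB : 0 ≤ B)
    (he1 : Tendsto (fun n : ℕ => (∑ i ∈ Finset.range n, e i) / n) atTop (𝓝 0))
    (he2 : Tendsto (fun n : ℕ => (∑ i ∈ Finset.range n, (e i) ^ 2) / n) atTop (𝓝 v))
    (H : Set (ℝ → ℝ)) (hHB : ∀ h ∈ H, ∀ w ∈ Icc 0 Δ, |h w| ≤ B)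
    (hHe : ∀ η > 0, ∃ δ > 0, ∀ h ∈ H, ∀ w ∈ Icc 0 Δ, ∀ w' ∈ Icc 0 Δ, |w - w'| < δ →
      |h w - h w'| ≤ η) (r : ℝ) (hr : 0 < r) :
    ∃ N : ℕ, ∀ n ≥ N, ∀ h ∈ H,
      |(1 / (n : ℝ)) * ∑ i ∈ Finset.range n, (h (((i : ℝ) + 1) * Δ / n) + e i) ^ 2 -
        (1 / Δ) * (∫ w in (0 : ℝ)..Δ, (h w) ^ 2) - v| < r := by
  obtain ⟨C, hC⟩ := bound_of_avg _ _ he2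
  have hC0 : 0 ≤ C := by
    have := (Finset.sum_nonneg (s := Finset.range 1) (fun i _ => sq_nonneg (e i))).trans (hC 1)
    simpa using this
  set η : ℝ := r / (8 * (B + C + 2)) with hη
  have hη0 : 0 < η := by positivity
  have hηr : 2 * B * η + 2 * (C + 1) * η ≤ r / 4 := by
    have : η * (8 * (B + C + 2)) = r := by rw [hη]; field_simp
    nlinarith
  obtain ⟨δ, hδ, hosc⟩ := hHe η hη0
  obtain ⟨K0, hK0⟩ := exists_nat_gt (2 * Δ / δ)
  set K := K0 + 1 with hKdef
  have hK1 : (1:ℝ) ≤ K := by rw [hKdef]; push_cast; linarith [Nat.cast_nonneg (α := ℝ) K0]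
  have hKδ : 2 * Δ / K < δ := by
    rw [div_lt_iff₀ (by linarith)]
    rw [div_lt_iff₀ hδ] at hK0
    rw [hKdef]; push_cast; nlinarith
  set θ : ℝ := r / (16 * (B + 1) * K) with hθ
  have hθ0 : 0 < θ := by positivity
  have hθr : 2 * (K * (B * (2 * θ))) ≤ r / 4 := by
    have : θ * (16 * (B + 1) * K) = r := by rw [hθ]; field_simp
    have : 0 ≤ θ * K := by positivity
    nlinarith
  obtain ⟨N1, hN1⟩ := max_partial_sum (fun n => ∑ i ∈ Finset.range n, e i) he1 θ hθ0
  obtain ⟨N2, hN2⟩ := Metric.tendsto_atTop.1 he2 (r / 4) (by positivity)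
  refine ⟨max (max N1 N2) K, fun n hn h hh => ?_⟩
  have hnN1 : N1 ≤ n := le_trans (le_trans (le_max_left _ _) (le_max_left _ _)) hn
  have hnN2 : N2 ≤ n := le_trans (le_trans (le_max_right _ _) (le_max_left _ _)) hn
  have hnK : K ≤ n := le_trans (le_max_right _ _) hn
  have hnK' : (K:ℝ) ≤ n := by exact_mod_cast hnK
  have hn1 : 1 ≤ n := by omega
  have hn0 : (0:ℝ) < n := by linarith
  have hΔn : Δ / n ≤ Δ / K := by gcongr
  -- h is continuous
  have hcont : ContinuousOn h (Icc 0 Δ) := by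
    rw [Metric.continuousOn_iff]
    intro w hw η' hη'
    obtain ⟨δ', hδ', h'⟩ := hHe (η' / 2) (by positivity)
    refine ⟨δ', hδ', fun a ha hd => ?_⟩
    exact (h' h hh a ha w hw hd).trans_lt (by linarith)
  have R := riemann_bound Δ hΔ (fun w => (h w) ^ 2) (hcont.pow 2) (2 * B * η) n hn1 (by
    intro w hw w' hw' hww
    have a1 := hosc h hh w hw w' hw' (by
      have : Δ / K ≤ 2 * Δ / K := by gcongr; linarith
      linarith)
    have a2 : |h w + h w'| ≤ 2 * B := by
      have := abs_add_le (h w) (h w')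
      have := hHB h hh w hw
      have := hHB h hh w' hw'
      linarith
    have : h w ^ 2 - h w' ^ 2 = (h w + h w') * (h w - h w') := by ring
    rw [this, abs_mul]
    exact mul_le_mul a2 a1 (abs_nonneg _) (by positivity))
  set a : ℕ → ℝ := fun i => h ((min (i + 1) n : ℕ) * Δ / n) with ha
  have hmem : ∀ i : ℕ, ((min (i + 1) n : ℕ) : ℝ) * Δ / n ∈ Icc 0 Δ := fun i => by
    refine ⟨by positivity, ?_⟩
    rw [div_le_iff₀ hn0, mul_comm]
    have : ((min (i + 1) n : ℕ) : ℝ) ≤ n := by exact_mod_cast min_le_right _ _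
    gcongr
  have BB := block_bound n K (by omega) a e B η (θ * n) hB (fun i _ => hHB h hh _ (hmem i))
    (by
      intro i hi l hl hil hli
      refine hosc h hh _ (hmem i) _ (hmem l) (lt_of_le_of_lt ?_ hKδ)
      have b1 : min (i + 1) n ≤ min (l + 1) n := by omega
      have b2 : min (l + 1) n ≤ min (i + 1) n + (n / K + 1) := by omega
      have b1' : ((min (i + 1) n : ℕ) : ℝ) ≤ (min (l + 1) n : ℕ) := by exact_mod_cast b1
      have b2' : ((min (l + 1) n : ℕ) : ℝ) ≤ (min (i + 1) n : ℕ) + ((n / K : ℕ) + 1) := by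
        exact_mod_cast b2
      have b3 : ((n / K : ℕ) : ℝ) ≤ n / K := Nat.cast_div_le
      have b4 : ((min (i + 1) n : ℕ) : ℝ) * Δ / n - (min (l + 1) n : ℕ) * Δ / n =
        -(((min (l + 1) n : ℕ) - (min (i + 1) n : ℕ) : ℝ) * (Δ / n)) := by ring
      rw [b4, abs_neg, abs_of_nonneg (mul_nonneg (by linarith) (by positivity))]
      calc _ ≤ ((n:ℝ) / K + 1) * (Δ / n) := by gcongr; linarith
        _ = Δ / K + Δ / n := by field_simp
        _ ≤ 2 * Δ / K := by rw [mul_div_assoc]; linarith)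
    (hN1 n hnN1)
  have hae : ∑ i ∈ Finset.range n, a i * e i =
      ∑ i ∈ Finset.range n, h (((i : ℝ) + 1) * Δ / n) * e i := by
    refine Finset.sum_congr rfl fun i hi => ?_
    have := Finset.mem_range.1 hi
    simp only [ha]
    rw [min_eq_left (by omega)]
    push_cast; rfl
  rw [hae] at BB
  have habs : ∑ i ∈ Finset.range n, |e i| ≤ (C + 1) * n := by
    have : ∑ i ∈ Finset.range n, |e i| ≤ ∑ i ∈ Finset.range n, (1 + (e i) ^ 2) := by
      refine Finset.sum_le_sum fun i _ => ?_
      rw [← sq_abs]; nlinarith [sq_nonneg (|e i| - 1)]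
    rw [Finset.sum_add_distrib] at this
    have h2 := hC n
    simp at this
    linarith
  have BB2 : |2 * (∑ i ∈ Finset.range n, h (((i : ℝ) + 1) * Δ / n) * e i) / n| ≤
      2 * (C + 1) * η + 2 * (K * (B * (2 * θ))) := by
    rw [abs_div, Nat.abs_cast, div_le_iff₀ hn0, abs_mul, abs_two]
    have := mul_le_mul_of_nonneg_left habs hη0.le
    nlinarith
  have V := hN2 n hnN2
  rw [Real.dist_eq] at V
  have dec : (1 / (n : ℝ)) * ∑ i ∈ Finset.range n, (h (((i : ℝ) + 1) * Δ / n) + e i) ^ 2 =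
      (∑ i ∈ Finset.range n, (h (((i : ℝ) + 1) * Δ / n)) ^ 2) / n +
      2 * (∑ i ∈ Finset.range n, h (((i : ℝ) + 1) * Δ / n) * e i) / n +
      (∑ i ∈ Finset.range n, (e i) ^ 2) / n := by
    rw [← add_div, ← add_div, one_div_mul_eq_div, Finset.mul_sum, ← Finset.sum_add_distrib,
      ← Finset.sum_add_distrib]
    congr 1
    exact Finset.sum_congr rfl fun i _ => by ring
  rw [dec]
  rw [abs_le] at R BB2
  rw [abs_lt] at V ⊢
  obtain ⟨R1, R2⟩ := R
  obtain ⟨Q1, Q2⟩ := BB2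
  obtain ⟨V1, V2⟩ := V
  constructor <;> linarith

/-- Theorem 1: Almost surely, `Q_n` converges uniformly on `Γ × 𝒢` to
`Q + σ²/(1-φ²)`. -/
theorem stmt4
    {Ω : Type*} [MeasurableSpace Ω] (μ : Measure Ω) [IsProbabilityMeasure μ]
    (Δ A xm xM : ℝ) (hΔ : 0 < Δ) (hA : 0 < A) (hxm : 0 < xm) (hxM : 0 < xM)
    (x z : ℝ → ℝ)
    (hxcont : ContinuousOn x (Icc 0 Δ))
    (hxrange : ∀ w ∈ Icc (0 : ℝ) Δ, x w ∈ Ioo (-xm) xM)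
    (hzcont : ContinuousOn z (Icc 0 Δ))
    (hzrange : ∀ w ∈ Icc (0 : ℝ) Δ, z w ∈ Icc 0 A)
    (hzmono : StrictMonoOn z (Icc 0 Δ))
    (U : ℤ → Ω → ℝ) (hUmeas : ∀ j, Measurable (U j))
    (hUindep : iIndepFun U μ)
    (hUident : ∀ j, μ.map (U j) = μ.map (U 0))
    (σ : ℝ) (hσ : 0 < σ)
    (hUmean : ∫ ω, U 0 ω ∂μ = 0)
    (hUvar : ∫ ω, (U 0 ω) ^ 2 ∂μ = σ ^ 2)
    (hU8 : Integrable (fun ω => (U 0 ω) ^ 8) μ)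
    (φ : ℝ) (hφ0 : φ ≠ 0) (hφ1 : |φ| < 1)
    (ε : ℤ → Ω → ℝ) (hεmeas : ∀ i, Measurable (ε i))
    (hεsum : ∀ᵐ ω ∂μ, ∀ i : ℤ, HasSum (fun j : ℕ => φ ^ j * U (i - (j : ℤ)) ω) (ε i ω))
    (γ₀ : ℝ) (hγ₀ : γ₀ ∈ Ioo (-(1 / xM)) (1 / xm))
    (m M L : ℝ) (hm : 0 < m) (hmM : m < M) (hL : 0 < L)
    (g₀ : ℝ → ℝ) (hg₀ : inG A m M L g₀) :
    ∀ᵐ ω ∂μ, ∀ e > (0 : ℝ), ∃ N : ℕ, ∀ n ≥ N,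
      ∀ γ ∈ Icc (-(1 / xM)) (1 / xm), ∀ g : ℝ → ℝ, inG A m M L g →
        |Qemp Δ γ₀ x z g₀ ε n γ g ω - Qlim Δ γ₀ x z g₀ γ g - σ ^ 2 / (1 - φ ^ 2)| < e := by
  obtain ⟨B, hB, hHB, hHe⟩ := family_props Δ A xm xM hxm hxM x z hxcont hxrange hzcont hzrange
    γ₀ (Ioo_subset_Icc_self hγ₀) m M L hm hL g₀ hg₀
  filter_upwards [noise_ae μ U hUmeas hUindep hUident σ hσ hUmean hUvar, hεsum] with ω hω hs
  obtain ⟨h1, h2, C, hC, h3⟩ := hω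
  obtain ⟨k1, k2⟩ := noise_avg (fun j => U j ω) (fun j => ε j ω) φ (σ ^ 2) C hφ1 hC hs h1 h2 h3
  intro r hr
  obtain ⟨N, hN⟩ := determ Δ hΔ (fun i : ℕ => ε ((i : ℤ) + 1) ω) _ B hB k1 k2
    {h | ∃ γ ∈ Icc (-(1 / xM)) (1 / xm), ∃ g : ℝ → ℝ, inG A m M L g ∧
      h = fun w => Real.log (1 + γ₀ * x w) - Real.log (1 + γ * x w) +
        Real.log (g₀ (z w)) - Real.log (g (z w))}
    (by
      rintro h ⟨γ, hγ, g, hg, rfl⟩ w hw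
      exact hHB γ hγ g hg w hw)
    (by
      intro η hη
      obtain ⟨δ, hδ, hh⟩ := hHe η hη
      refine ⟨δ, hδ, ?_⟩
      rintro h ⟨γ, hγ, g, hg, rfl⟩ w hw w' hw' hww
      exact hh γ hγ g hg w hw w' hw' hww) r hr
  refine ⟨N, fun n hn γ hγ g hg => ?_⟩
  have key := hN n hn _ ⟨γ, hγ, g, hg, rfl⟩
  have e : Qemp Δ γ₀ x z g₀ ε n γ g ω = (1 / (n : ℝ)) * ∑ i ∈ Finset.range n,
      ((Real.log (1 + γ₀ * x (((i : ℝ) + 1) * Δ / n)) - Real.log (1 + γ * x (((i : ℝ) + 1) * Δ / n))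
        + Real.log (g₀ (z (((i : ℝ) + 1) * Δ / n))) - Real.log (g (z (((i : ℝ) + 1) * Δ / n))))
        + ε ((i : ℤ) + 1) ω) ^ 2 := by
    unfold Qemp
    rw [sum_Icc_one]
    congr 1
    refine Finset.sum_congr rfl fun i _ => ?_
    push_cast
    ring
  rw [e]
  exact key
end

section
/- (Theorem 2) Suppose Q(γ,g) has a unique minimum over Γ×𝒢, attained at (γ₀,g₀); i.e., Q(γ,g)=0 with (γ,g)∈Γ×𝒢 implies γ=γ₀ and g=g₀ on [0,A]. Let (γ̂_n, ĝ_n) be random elements of Γ×𝒢 such that with probability 1, for every n, Q_n(γ̂_n, ĝ_n) = inf_{(γ,g)∈Γ×𝒢} Q_n(γ,g). Then with probability 1, γ̂_n → γ₀ and sup_{t∈[0,A]} |ĝ_n(t) − g₀(t)| → 0 as n→∞. -/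
open MeasureTheory ProbabilityTheory Filter Set Topology

/-- Riemann sums at right endpoints. -/
lemma riemann_aux (Δ : ℝ) (hΔ : 0 < Δ) (f : ℝ → ℝ) (hf : ContinuousOn f (Icc 0 Δ)) :
    Tendsto (fun n : ℕ => (1 / (n : ℝ)) * ∑ i ∈ Finset.range n, f (((i : ℝ) + 1) * Δ / n)) atTop
      (𝓝 ((1 / Δ) * ∫ w in (0 : ℝ)..Δ, f w)) := by
  have huc := isCompact_Icc.uniformContinuousOn_of_continuous hf
  rw [Metric.uniformContinuousOn_iff] at huc
  rw [Metric.tendsto_atTop]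
  intro e he
  obtain ⟨δ, hδ, H⟩ := huc (e / 2) (by positivity)
  obtain ⟨N, hN⟩ := exists_nat_gt (Δ / δ)
  refine ⟨N + 1, fun n hn => ?_⟩
  have hn0 : (0 : ℝ) < n := by
    have : 0 < n := by omega
    exact_mod_cast this
  have hnδ : Δ / n < δ := by
    have : (N : ℝ) < n := by exact_mod_cast hn
    rw [div_lt_iff₀ hδ] at hN
    rw [div_lt_iff₀ hn0]
    nlinarith
  have hmem : ∀ i : ℕ, i ≤ n → ((i : ℝ) * Δ / n) ∈ Icc 0 Δ := by
    intro i hi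
    have : (i : ℝ) ≤ n := by exact_mod_cast hi
    refine ⟨by positivity, ?_⟩
    rw [div_le_iff₀ hn0]
    nlinarith
  have hle : ∀ i : ℕ, (i : ℝ) * Δ / n ≤ ((i + 1 : ℕ) : ℝ) * Δ / n := by
    intro i
    push_cast
    gcongr
    linarith
  have hintv : ∀ i < n, IntervalIntegrable f volume ((i : ℝ) * Δ / n) (((i + 1 : ℕ) : ℝ) * Δ / n) := by
    intro i hi
    apply ContinuousOn.intervalIntegrable
    apply hf.mono
    rw [uIcc_of_le (hle i)]
    exact Icc_subset_Icc (hmem i hi.le).1 (hmem (i + 1) hi).2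
  have hsum := intervalIntegral.sum_integral_adjacent_intervals (a := fun i : ℕ => (i : ℝ) * Δ / n)
    (f := f) (μ := volume) (n := n) hintv
  have h0 : ((n : ℕ) : ℝ) * Δ / n = Δ := by field_simp
  simp only [h0] at hsum
  simp only [Nat.cast_zero, zero_mul, zero_div] at hsum
  rw [← hsum, Finset.mul_sum, Finset.mul_sum, Real.dist_eq, ← Finset.sum_sub_distrib]
  have hterm : ∀ i ∈ Finset.range n, |1 / (n : ℝ) * f (((i : ℝ) + 1) * Δ / n) -
      1 / Δ * ∫ w in ((i : ℝ) * Δ / n)..(((i + 1 : ℕ) : ℝ) * Δ / n), f w| ≤ (e / 2) / n := by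
    intro i hi
    have hi' := Finset.mem_range.1 hi
    have hlen : ((i + 1 : ℕ) : ℝ) * Δ / n - (i : ℝ) * Δ / n = Δ / n := by
      push_cast; ring
    have e1 : 1 / (n : ℝ) * f (((i : ℝ) + 1) * Δ / n) -
      1 / Δ * ∫ w in ((i : ℝ) * Δ / n)..(((i + 1 : ℕ) : ℝ) * Δ / n), f w =
      (1 / Δ) * ∫ w in ((i : ℝ) * Δ / n)..(((i + 1 : ℕ) : ℝ) * Δ / n),
        (f (((i : ℝ) + 1) * Δ / n) - f w) := by
      rw [intervalIntegral.integral_sub (by simp) (hintv i hi'), intervalIntegral.integral_const, hlen]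
      simp only [smul_eq_mul]
      field_simp
    rw [e1, abs_mul, abs_of_pos (by positivity : 0 < 1 / Δ)]
    have := intervalIntegral.norm_integral_le_of_norm_le_const (C := e / 2)
      (f := fun w => f (((i : ℝ) + 1) * Δ / n) - f w) (a := (i : ℝ) * Δ / n)
      (b := ((i + 1 : ℕ) : ℝ) * Δ / n) (by
        intro w hw
        rw [uIoc_of_le (hle i)] at hw
        have h1 := hmem i hi'.le
        have h2 := hmem (i + 1) hi'
        have h3 := H _ h2 w ⟨h1.1.trans hw.1.le, hw.2.trans h2.2⟩ (by
          rw [Real.dist_eq, abs_of_nonneg (by linarith [hw.2])]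
          linarith [hw.1])
        rw [Real.dist_eq] at h3
        push_cast at h3
        exact h3.le)
    rw [hlen, Real.norm_eq_abs, abs_of_pos (by positivity : 0 < Δ / n)] at this
    calc _ ≤ 1 / Δ * (e / 2 * (Δ / n)) := by gcongr
      _ = _ := by field_simp
  calc _ ≤ ∑ i ∈ Finset.range n, (e / 2) / n :=
        (Finset.abs_sum_le_sum_abs _ _).trans (Finset.sum_le_sum hterm)
    _ = e / 2 := by simp; field_simp
    _ < e := by linarith

/-- weighted averages against a Lipschitz function. -/
lemma lip_aux (Δ : ℝ) (hΔ : 0 < Δ) (e : ℕ → ℝ)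
    (he : Tendsto (fun n : ℕ => (∑ i ∈ Finset.range n, e i) / (n : ℝ)) atTop (𝓝 0))
    (f : ℝ → ℝ) (K : ℝ) (hK : 0 ≤ K)
    (hf : ∀ s ∈ Icc 0 Δ, ∀ t ∈ Icc 0 Δ, |f s - f t| ≤ K * |s - t|) :
    Tendsto (fun n : ℕ => (∑ i ∈ Finset.range n, e i * f (((i : ℝ) + 1) * Δ / n)) / (n : ℝ))
      atTop (𝓝 0) := by
  set S : ℕ → ℝ := fun n => ∑ i ∈ Finset.range n, e i with hS
  -- averages of |S i| / (i)
  have hces : Tendsto (fun n : ℕ => (n : ℝ)⁻¹ * ∑ i ∈ Finset.range n, |S i / i|) atTop (𝓝 0) := by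
    have := (he.abs).cesaro
    simpa using this
  have hbd : ∀ n : ℕ, |(∑ i ∈ Finset.range n, e i * f (((i : ℝ) + 1) * Δ / n)) / (n : ℝ)| ≤
      |f Δ| * |S n / n| + K * Δ * ((n : ℝ)⁻¹ * ∑ i ∈ Finset.range n, |S i / i|) := by
    intro n
    rcases Nat.eq_zero_or_pos n with rfl | hn
    · simp
    have hn0 : (0 : ℝ) < n := by exact_mod_cast hn
    have key : ∀ k : ℕ, ∑ i ∈ Finset.range k, e i * f (((i : ℝ) + 1) * Δ / n) =
        S k * f ((k : ℝ) * Δ / n) - ∑ i ∈ Finset.range k,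
          S i * (f (((i : ℝ) + 1) * Δ / n) - f ((i : ℝ) * Δ / n)) := by
      intro k
      induction k with
      | zero => simp [hS]
      | succ k ih =>
        rw [Finset.sum_range_succ, ih, Finset.sum_range_succ]
        have : S (k + 1) = S k + e k := by simp [hS, Finset.sum_range_succ]
        rw [this]; push_cast; ring
    have h0 : (n : ℝ) * Δ / n = Δ := by field_simp
    rw [key n, h0]
    have hterm : ∀ i ∈ Finset.range n, |S i * (f (((i : ℝ) + 1) * Δ / n) - f ((i : ℝ) * Δ / n))| ≤
        K * Δ * |S i / i| := by
      intro i hi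
      have hi' := Finset.mem_range.1 hi
      rcases Nat.eq_zero_or_pos i with rfl | hi0
      · simp [hS]
      have hi0' : (0 : ℝ) < i := by exact_mod_cast hi0
      have hin : (i : ℝ) + 1 ≤ n := by exact_mod_cast hi'
      have := hf (((i : ℝ) + 1) * Δ / n) ⟨by positivity, by rw [div_le_iff₀ hn0]; nlinarith⟩
        ((i : ℝ) * Δ / n) ⟨by positivity, by rw [div_le_iff₀ hn0]; nlinarith⟩
      have e2 : ((i : ℝ) + 1) * Δ / n - (i : ℝ) * Δ / n = Δ / n := by ring
      rw [e2, abs_of_pos (by positivity : 0 < Δ / n)] at this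
      rw [abs_mul, abs_div, abs_of_pos hi0']
      calc |S i| * _ ≤ |S i| * (K * (Δ / n)) := by gcongr
        _ ≤ |S i| * (K * (Δ / i)) := by gcongr
        _ = _ := by field_simp
    rw [abs_div, abs_of_pos hn0, abs_div, abs_of_pos hn0, div_le_iff₀ hn0]
    calc _ ≤ |S n * f Δ| + |∑ i ∈ Finset.range n,
          S i * (f (((i : ℝ) + 1) * Δ / n) - f ((i : ℝ) * Δ / n))| := abs_sub _ _
      _ ≤ |S n * f Δ| + ∑ i ∈ Finset.range n, K * Δ * |S i / i| := by
          gcongr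
          exact (Finset.abs_sum_le_sum_abs _ _).trans (Finset.sum_le_sum hterm)
      _ = _ := by
          rw [← Finset.mul_sum, abs_mul]; field_simp
  apply squeeze_zero_norm hbd
  have h1 := (he.abs.const_mul |f Δ|).add (hces.const_mul (K * Δ))
  simpa using h1

/-- weighted averages against a continuous function. -/
lemma cont_aux (Δ : ℝ) (hΔ : 0 < Δ) (e : ℕ → ℝ)
    (he : Tendsto (fun n : ℕ => (∑ i ∈ Finset.range n, e i) / (n : ℝ)) atTop (𝓝 0))
    (C : ℝ) (hC : ∀ n : ℕ, ∑ i ∈ Finset.range n, |e i| ≤ C * n)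
    (f : ℝ → ℝ) (hf : ContinuousOn f (Icc 0 Δ)) :
    Tendsto (fun n : ℕ => (∑ i ∈ Finset.range n, e i * f (((i : ℝ) + 1) * Δ / n)) / (n : ℝ))
      atTop (𝓝 0) := by
  have hC0 : 0 ≤ C := by
    have := hC 1
    simp at this
    exact (abs_nonneg _).trans this
  rw [Metric.tendsto_atTop]
  intro r hr
  obtain ⟨p, hp⟩ := exists_polynomial_near_of_continuousOn 0 Δ f hf (r / (2 * (C + 1))) (by positivity)
  obtain ⟨K, hK⟩ := (p.contDiff_aeval (n := 1) (𝕜 := ℝ)).contDiffOn.exists_lipschitzOnWith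
    (s := Icc 0 Δ) (by norm_num) (convex_Icc 0 Δ) isCompact_Icc
  have hl := lip_aux Δ hΔ e he (fun t => p.eval t) K K.2 (by
    intro s hs t ht
    have := hK.dist_le_mul s hs t ht
    simpa [Real.dist_eq] using this)
  rw [Metric.tendsto_atTop] at hl
  obtain ⟨N, hN⟩ := hl (r / 2) (by positivity)
  refine ⟨N + 1, fun n hn => ?_⟩
  have h1 := hN n (by omega)
  have hn0 : (0 : ℝ) < n := by
    have : 0 < n := by omega
    exact_mod_cast this
  rw [Real.dist_eq, sub_zero] at h1 ⊢
  have h2 : |(∑ i ∈ Finset.range n, e i * f (((i : ℝ) + 1) * Δ / n)) / (n : ℝ) -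
     (∑ i ∈ Finset.range n, e i * p.eval (((i : ℝ) + 1) * Δ / n)) / (n : ℝ)| ≤
      C * (r / (2 * (C + 1))) := by
    rw [← sub_div, ← Finset.sum_sub_distrib, abs_div, abs_of_pos hn0, div_le_iff₀ hn0]
    calc _ ≤ ∑ i ∈ Finset.range n, |e i| * (r / (2 * (C + 1))) := by
          refine (Finset.abs_sum_le_sum_abs _ _).trans (Finset.sum_le_sum fun i hi => ?_)
          rw [← mul_sub, abs_mul, abs_sub_comm]
          have hin : (i : ℝ) + 1 ≤ n := by exact_mod_cast Finset.mem_range.1 hi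
          have := hp (((i : ℝ) + 1) * Δ / n) ⟨by positivity, by rw [div_le_iff₀ hn0]; nlinarith⟩
          gcongr
      _ ≤ (C * n) * (r / (2 * (C + 1))) := by
          rw [← Finset.sum_mul]
          gcongr
          exact hC n
      _ = _ := by ring
  have h3 : C * (r / (2 * (C + 1))) ≤ r / 2 := by
    rw [mul_div_assoc', div_le_div_iff₀ (by positivity) (by positivity)]
    nlinarith
  have := abs_sub_abs_le_abs_sub ((∑ i ∈ Finset.range n, e i * f (((i : ℝ) + 1) * Δ / n)) / (n : ℝ))
     ((∑ i ∈ Finset.range n, e i * p.eval (((i : ℝ) + 1) * Δ / n)) / (n : ℝ))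
  linarith

/-- Limits of uniformly convergent minimisers have zero L2 norm. -/
lemma limit_aux (Δ : ℝ) (hΔ : 0 < Δ) (e : ℕ → ℝ)
    (he : Tendsto (fun n : ℕ => (∑ i ∈ Finset.range n, e i) / (n : ℝ)) atTop (𝓝 0))
    (C : ℝ) (hC : ∀ n : ℕ, ∑ i ∈ Finset.range n, |e i| ≤ C * n)
    (F : ℝ → ℝ) (hF : ContinuousOn F (Icc 0 Δ)) (H : ℕ → ℝ → ℝ) (ψ : ℕ → ℕ) (hψ : StrictMono ψ)
    (hunif : ∀ r > 0, ∀ᶠ k in atTop, ∀ w ∈ Icc 0 Δ, |H k w - F w| ≤ r)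
    (hineq : ∀ k, ∑ i ∈ Finset.range (ψ k), (H k (((i : ℝ) + 1) * Δ / ψ k)) ^ 2 ≤
      2 * ∑ i ∈ Finset.range (ψ k), e i * H k (((i : ℝ) + 1) * Δ / ψ k)) :
    (1 / Δ) * ∫ w in (0 : ℝ)..Δ, (F w) ^ 2 = 0 := by
  have hC0 : 0 ≤ C := by
    have := hC 1
    simp at this
    exact (abs_nonneg _).trans this
  have hR := (riemann_aux Δ hΔ (fun w => F w ^ 2) (hF.pow 2)).comp hψ.tendsto_atTop
  have hE := (cont_aux Δ hΔ e he C hC F hF).comp hψ.tendsto_atTop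
  apply le_antisymm
  · have hb : ∀ r > 0, (1 / Δ) * ∫ w in (0 : ℝ)..Δ, (F w) ^ 2 ≤ 4 * C * r + 2 * r ^ 2 := by
      intro r hr
      have hlim := (hE.const_mul 4).add_const (4 * C * r + 2 * r ^ 2)
      rw [mul_zero, zero_add] at hlim
      refine le_of_tendsto_of_tendsto hR hlim ?_
      filter_upwards [hunif r hr, hψ.tendsto_atTop.eventually_gt_atTop 0] with k hk hk0
      simp only [Function.comp_apply]
      set n := ψ k with hn
      have hn0 : (0 : ℝ) < n := by exact_mod_cast hk0
      have hmem : ∀ i ∈ Finset.range n, ((i : ℝ) + 1) * Δ / n ∈ Icc 0 Δ := by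
        intro i hi
        have hin : (i : ℝ) + 1 ≤ n := by exact_mod_cast Finset.mem_range.1 hi
        exact ⟨by positivity, by rw [div_le_iff₀ hn0]; nlinarith⟩
      have s1 : ∑ i ∈ Finset.range n, F (((i : ℝ) + 1) * Δ / n) ^ 2 ≤
          2 * ∑ i ∈ Finset.range n, (H k (((i : ℝ) + 1) * Δ / n)) ^ 2 + n * (2 * r ^ 2) := by
        have : (n : ℝ) * (2 * r ^ 2) = ∑ i ∈ Finset.range n, 2 * r ^ 2 := by simp
        rw [this, Finset.mul_sum, ← Finset.sum_add_distrib]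
        refine Finset.sum_le_sum fun i hi => ?_
        have h1 := sq_le_sq' (abs_le.1 (hk _ (hmem i hi))).1 (abs_le.1 (hk _ (hmem i hi))).2
        nlinarith [sq_nonneg (2 * H k (((i : ℝ) + 1) * Δ / n) - F (((i : ℝ) + 1) * Δ / n))]
      have s2 : ∑ i ∈ Finset.range n, e i * H k (((i : ℝ) + 1) * Δ / n) ≤
          ∑ i ∈ Finset.range n, e i * F (((i : ℝ) + 1) * Δ / n) + C * n * r := by
        calc _ ≤ ∑ i ∈ Finset.range n, (e i * F (((i : ℝ) + 1) * Δ / n) + |e i| * r) := by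
              refine Finset.sum_le_sum fun i hi => ?_
              have h1 := hk _ (hmem i hi)
              have h2 := le_abs_self (e i * (H k (((i : ℝ) + 1) * Δ / n) - F (((i : ℝ) + 1) * Δ / n)))
              rw [abs_mul] at h2
              have h3 := mul_le_mul_of_nonneg_left h1 (abs_nonneg (e i))
              linarith
          _ ≤ _ := by
              rw [Finset.sum_add_distrib, ← Finset.sum_mul]
              gcongr
              exact hC n
      have s3 := hineq k
      rw [← hn] at s3
      rw [one_div, inv_mul_le_iff₀ hn0, mul_add, mul_left_comm, mul_div_cancel₀ _ hn0.ne']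
      linarith
    have hl : Tendsto (fun r : ℝ => 4 * C * r + 2 * r ^ 2) (𝓝[>] 0) (𝓝 0) := by
      have : Tendsto (fun r : ℝ => 4 * C * r + 2 * r ^ 2) (𝓝 0) (𝓝 (4 * C * 0 + 2 * 0 ^ 2)) :=
        Continuous.tendsto (by fun_prop) 0
      simp only [mul_zero, ne_eq, OfNat.ofNat_ne_zero, not_false_eq_true, zero_pow, add_zero] at this
      exact this.mono_left nhdsWithin_le_nhds
    exact ge_of_tendsto hl (eventually_nhdsWithin_of_forall hb)
  · exact mul_nonneg (by positivity) (intervalIntegral.integral_nonneg hΔ.le fun w _ => sq_nonneg _)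

/-- Deterministic AR(1) averaging. -/
lemma ar_aux (φ : ℝ) (hφ : |φ| < 1) (a u : ℕ → ℝ) (hrec : ∀ i, a (i + 1) = φ * a i + u i)
    (hu : Tendsto (fun n : ℕ => (∑ i ∈ Finset.range n, u i) / (n : ℝ)) atTop (𝓝 0))
    (s : ℝ) (hu2 : Tendsto (fun n : ℕ => (∑ i ∈ Finset.range n, u i ^ 2) / (n : ℝ)) atTop (𝓝 s)) :
    Tendsto (fun n : ℕ => (∑ i ∈ Finset.range n, a (i + 1)) / (n : ℝ)) atTop (𝓝 0) ∧
    ∃ C, ∀ n : ℕ, ∑ i ∈ Finset.range n, |a (i + 1)| ≤ C * n := by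
  obtain ⟨B, hB⟩ := hu2.bddAbove_range
  have hB' : ∀ n : ℕ, ∑ i ∈ Finset.range n, u i ^ 2 ≤ B * n := by
    intro n
    rcases Nat.eq_zero_or_pos n with rfl | hn
    · simp
    have hn0 : (0 : ℝ) < n := by exact_mod_cast hn
    have := hB (mem_range_self n)
    rwa [div_le_iff₀ hn0] at this
  set q := 1 - |φ| with hq
  have hq0 : 0 < q := by linarith
  have hstep : ∀ i, q * a (i + 1) ^ 2 ≤ q * |φ| * a i ^ 2 + u i ^ 2 := by
    intro i
    rw [hrec]
    have h1 : φ ^ 2 = |φ| ^ 2 := (sq_abs φ).symm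
    have h2 : φ * a i * u i ≤ |φ| * |a i| * |u i| := by
      rw [← abs_mul, ← abs_mul]; exact le_abs_self _
    have h3 : a i ^ 2 = |a i| ^ 2 := (sq_abs _).symm
    have h4 : u i ^ 2 = |u i| ^ 2 := (sq_abs _).symm
    have h5 : (φ * a i + u i) ^ 2 ≤ (|φ| * |a i| + |u i|) ^ 2 := by
      calc (φ * a i + u i) ^ 2 = |φ| ^ 2 * |a i| ^ 2 + 2 * (φ * a i * u i) + |u i| ^ 2 := by
            rw [← h1, ← h3, ← h4]; ring
        _ ≤ _ := by nlinarith
    have hf0 := abs_nonneg φ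
    rw [h3, h4]
    have h6 := mul_le_mul_of_nonneg_left h5 hq0.le
    refine h6.trans ?_
    have h7 : 0 ≤ |φ| * (q * |a i| - |u i|) ^ 2 := by positivity
    have h8 : q * |φ| * |a i| ^ 2 + |u i| ^ 2 - q * (|φ| * |a i| + |u i|) ^ 2 =
      |φ| * (q * |a i| - |u i|) ^ 2 := by rw [hq]; ring
    linarith
  have hsum : ∀ n : ℕ, q ^ 2 * ∑ i ∈ Finset.range n, a (i + 1) ^ 2 + q * |φ| * a n ^ 2 ≤
      q * |φ| * a 0 ^ 2 + ∑ i ∈ Finset.range n, u i ^ 2 := by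
    intro n
    induction n with
    | zero => simp
    | succ n ih =>
      rw [Finset.sum_range_succ, Finset.sum_range_succ]
      have := hstep n
      have e : q ^ 2 * a (n + 1) ^ 2 + q * |φ| * a (n + 1) ^ 2 = q * a (n + 1) ^ 2 := by
        rw [hq]; ring
      linarith
  set D := (q * |φ| * a 0 ^ 2 + B) / q ^ 2 with hD
  have hsq : ∀ n : ℕ, ∑ i ∈ Finset.range n, a (i + 1) ^ 2 ≤ D * n := by
    intro n
    rcases Nat.eq_zero_or_pos n with rfl | hn
    · simp
    have hn1 : (1 : ℝ) ≤ n := by exact_mod_cast hn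
    rw [hD, div_mul_eq_mul_div, le_div_iff₀ (by positivity), mul_comm]
    have h1 := hsum n
    have h2 := hB' n
    have h3 : 0 ≤ q * |φ| * a n ^ 2 := by positivity
    have h4 : 0 ≤ q * |φ| * a 0 ^ 2 := by positivity
    nlinarith
  refine ⟨?_, 1 + D, ?_⟩
  · have hlast : ∀ n : ℕ, a n ^ 2 ≤ (D * n) + a 0 ^ 2 := by
      intro n
      cases n with
      | zero => simp
      | succ k =>
        have h1 := hsq (k + 1)
        rw [Finset.sum_range_succ] at h1
        have h2 : 0 ≤ ∑ i ∈ Finset.range k, a (i + 1) ^ 2 := Finset.sum_nonneg fun _ _ => sq_nonneg _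
        nlinarith [sq_nonneg (a 0)]
    have hinv : Tendsto (fun n : ℕ => ((n : ℝ))⁻¹) atTop (𝓝 0) := tendsto_inv_atTop_nhds_zero_nat
    have hz2 : Tendsto (fun n : ℕ => (a n / n) ^ 2) atTop (𝓝 0) := by
      have hlim : Tendsto (fun n : ℕ => D * (n : ℝ)⁻¹ + a 0 ^ 2 * ((n : ℝ)⁻¹ * (n : ℝ)⁻¹)) atTop (𝓝 0) := by
        simpa using (hinv.const_mul D).add ((hinv.mul hinv).const_mul (a 0 ^ 2))
      refine squeeze_zero (fun n => sq_nonneg _) (fun n => ?_) hlim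
      rcases Nat.eq_zero_or_pos n with rfl | hn
      · simp
      have hn0 : (0 : ℝ) < n := by exact_mod_cast hn
      have := hlast n
      rw [div_pow, div_le_iff₀ (by positivity)]
      have e : (D * (n : ℝ)⁻¹ + a 0 ^ 2 * ((n : ℝ)⁻¹ * (n : ℝ)⁻¹)) * n ^ 2 = D * n + a 0 ^ 2 := by
        field_simp
      rw [e]; exact this
    have hz : Tendsto (fun n : ℕ => a n / n) atTop (𝓝 0) := by
      have := hz2.sqrt
      simp only [Real.sqrt_sq_eq_abs, Real.sqrt_zero] at this
      exact (tendsto_zero_iff_abs_tendsto_zero _).2 this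
    have hS : ∀ n : ℕ, ∑ i ∈ Finset.range n, a (i + 1) =
        (1 - φ)⁻¹ * (φ * (a 0 - a n) + ∑ i ∈ Finset.range n, u i) := by
      intro n
      have hne : 1 - φ ≠ 0 := by
        have := le_abs_self φ
        intro h; linarith
      rw [eq_inv_mul_iff_mul_eq₀ hne]
      induction n with
      | zero => simp
      | succ n ih =>
        rw [Finset.sum_range_succ, Finset.sum_range_succ, mul_add, ih, hrec n]; ring
    have hfin := (((hinv.const_mul (φ * a 0)).sub (hz.const_mul φ)).add hu).const_mul (1 - φ)⁻¹
    simp only [mul_zero, sub_zero, add_zero] at hfin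
    refine hfin.congr fun n => ?_
    rw [hS]; simp only [div_eq_mul_inv]; ring
  · intro n
    calc _ ≤ ∑ i ∈ Finset.range n, (1 + a (i + 1) ^ 2) := by
          refine Finset.sum_le_sum fun i _ => ?_
          rw [← sq_abs]
          nlinarith [sq_nonneg (|a (i + 1)| - 1), sq_nonneg (a (i+1)), sq_abs (a (i+1))]
      _ ≤ _ := by
          rw [Finset.sum_add_distrib]
          have := hsq n
          simp
          linarith

/-- Almost sure properties of the AR(1) noise. -/
lemma noise_aux {Ω : Type*} [MeasurableSpace Ω] (μ : Measure Ω) [IsProbabilityMeasure μ]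
    (U : ℤ → Ω → ℝ) (hUmeas : ∀ j, Measurable (U j))
    (hUindep : iIndepFun U μ)
    (hUident : ∀ j, μ.map (U j) = μ.map (U 0))
    (hUmean : ∫ ω, U 0 ω ∂μ = 0)
    (hU8 : Integrable (fun ω => (U 0 ω) ^ 8) μ)
    (φ : ℝ) (hφ1 : |φ| < 1)
    (ε : ℤ → Ω → ℝ)
    (hεsum : ∀ᵐ ω ∂μ, ∀ i : ℤ, HasSum (fun j : ℕ => φ ^ j * U (i - (j : ℤ)) ω) (ε i ω)) :
    ∀ᵐ ω ∂μ, Tendsto (fun n : ℕ => (∑ i ∈ Finset.range n, ε ((i : ℤ) + 1) ω) / (n : ℝ)) atTop (𝓝 0) ∧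
    ∃ C, ∀ n : ℕ, ∑ i ∈ Finset.range n, |ε ((i : ℤ) + 1) ω| ≤ C * n := by
  have hid : ∀ i j, IdentDistrib (U i) (U j) μ μ := fun i j =>
    ⟨(hUmeas i).aemeasurable, (hUmeas j).aemeasurable, by rw [hUident i, hUident j]⟩
  have hp8 : ∀ t : ℝ, 0 ≤ t → t ≤ 1 + t ^ 4 := by
    intro t ht
    nlinarith [sq_nonneg (t ^ 2 - 1), sq_nonneg (t - 1), sq_nonneg (t^2)]
  have hint2 : Integrable (fun ω => U 0 ω ^ 2) μ := by
    refine ((integrable_const (1 : ℝ)).add hU8).mono' ((hUmeas 0).pow_const 2).aestronglyMeasurable ?_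
    filter_upwards with ω
    rw [Real.norm_eq_abs, abs_of_nonneg (sq_nonneg _)]
    have := hp8 (U 0 ω ^ 2) (sq_nonneg _)
    simp only [Pi.add_apply]
    linarith [this, (by ring : (U 0 ω ^ 2) ^ 4 = U 0 ω ^ 8)]
  have hint1 : Integrable (U 0) μ := by
    refine ((integrable_const (1 : ℝ)).add hint2).mono' (hUmeas 0).aestronglyMeasurable ?_
    filter_upwards with ω
    rw [Real.norm_eq_abs]
    simp only [Pi.add_apply]
    nlinarith [sq_nonneg (|U 0 ω| - 1), sq_abs (U 0 ω)]
  have hpair : ∀ i j : ℕ, i ≠ j → IndepFun (U ((i : ℤ) + 1)) (U ((j : ℤ) + 1)) μ := by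
    intro i j hij
    apply hUindep.indepFun
    intro h; apply hij; omega
  have L1 := strong_law_ae_real (μ := μ) (fun i : ℕ => U ((i : ℤ) + 1))
    ((hid _ 0).integrable_iff.2 hint1) (fun i j hij => hpair i j hij) (fun i => hid _ _)
  have hsqm : Measurable (fun t : ℝ => t ^ 2) := by fun_prop
  have L2 := strong_law_ae_real (μ := μ) (fun (i : ℕ) ω => U ((i : ℤ) + 1) ω ^ 2)
    (((hid _ 0).comp hsqm).integrable_iff.2 hint2)
    (fun i j hij => (hpair i j hij).comp hsqm hsqm) (fun i => (hid _ _).comp hsqm)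
  have hmean : ∫ ω, U ((0 : ℕ) + 1) ω ∂μ = 0 := by
    rw [(hid ((0 : ℕ) + 1) 0).integral_eq, hUmean]
  filter_upwards [L1, L2, hεsum] with ω h1 h2 h3
  rw [hmean] at h1
  have hrec : ∀ i : ℕ, ε (((i + 1 : ℕ) : ℤ)) ω = φ * ε (i : ℤ) ω + U ((i : ℤ) + 1) ω := by
    intro i
    have a1 := (hasSum_nat_add_iff' 1).2 (h3 (((i + 1 : ℕ) : ℤ)))
    have a2 := (h3 (i : ℤ)).mul_left φ
    have : (fun n : ℕ => φ ^ (n + 1) * U (((i + 1 : ℕ) : ℤ) - ((n + 1 : ℕ) : ℤ)) ω) =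
        fun n : ℕ => φ * (φ ^ n * U ((i : ℤ) - n) ω) := by
      funext n
      have : ((i + 1 : ℕ) : ℤ) - ((n + 1 : ℕ) : ℤ) = (i : ℤ) - n := by push_cast; ring
      rw [this]; ring
    rw [this] at a1
    have := a1.unique a2
    simp at this
    push_cast
    linarith
  have := ar_aux φ hφ1 (fun i : ℕ => ε (i : ℤ) ω) (fun i : ℕ => U ((i : ℤ) + 1) ω) hrec h1 _ h2
  simpa using this

/-- The compact set of restrictions of members of 𝒢. -/
def GK (A m M L : ℝ) : Set (BoundedContinuousFunction (Icc (0 : ℝ) A) ℝ) :=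
  {f | (∀ s t : Icc (0 : ℝ) A, s ≤ t → f t ≤ f s) ∧ (∀ t, f t ∈ Icc m M) ∧
    ∀ s t : Icc (0 : ℝ) A, |f s - f t| ≤ L * dist s t}

lemma GK_compact (A m M L : ℝ) : IsCompact (GK A m M L) := by
  have hev : ∀ t : Icc (0 : ℝ) A,
      Continuous fun f : BoundedContinuousFunction (Icc (0 : ℝ) A) ℝ => f t := fun t => by fun_prop
  refine BoundedContinuousFunction.arzela_ascoli₂ (Icc m M) isCompact_Icc _ ?_ ?_ ?_
  · have : GK A m M L = (⋂ s, ⋂ t, ⋂ _ : s ≤ t, {f | f t ≤ f s}) ∩ ((⋂ t, {f | f t ∈ Icc m M}) ∩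
        ⋂ s, ⋂ t, {f | |f s - f t| ≤ L * dist s t}) := by
      ext f
      simp only [GK, mem_inter_iff, mem_iInter, mem_setOf_eq]
    rw [this]
    refine (isClosed_iInter fun s => isClosed_iInter fun t => isClosed_iInter fun _ =>
      isClosed_le (hev t) (hev s)).inter ((isClosed_iInter fun t =>
        isClosed_Icc.preimage (hev t)).inter (isClosed_iInter fun s => isClosed_iInter fun t =>
        isClosed_le (((hev s).sub (hev t)).abs) continuous_const))
  · intro f t hf
    exact hf.2.1 t
  · refine Metric.equicontinuous_of_continuity_modulus (fun d => L * d) ?_ _ ?_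
    · have : Tendsto (fun d : ℝ => L * d) (𝓝 0) (𝓝 (L * 0)) := Continuous.tendsto (by fun_prop) 0
      simpa using this
    · intro s t f
      rw [Real.dist_eq]
      exact f.2.2.2 s t

/-- restriction of a continuous function -/
noncomputable def toB (A : ℝ) (g : ℝ → ℝ) (hg : ContinuousOn g (Icc 0 A)) :
    BoundedContinuousFunction (Icc (0 : ℝ) A) ℝ :=
  BoundedContinuousFunction.mkOfCompact ⟨(Icc 0 A).restrict g, hg.restrict⟩

lemma toB_apply (A : ℝ) (g : ℝ → ℝ) (hg : ContinuousOn g (Icc 0 A)) (t : Icc (0 : ℝ) A) :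
    toB A g hg t = g t := rfl

lemma toB_mem (A m M L : ℝ) (hL : 0 < L) (g : ℝ → ℝ) (hg : inG A m M L g) :
    toB A g hg.1 ∈ GK A m M L := by
  refine ⟨fun s t hst => hg.2.1 s.2 t.2 hst, fun t => hg.2.2.1 t t.2, fun s t => ?_⟩
  have := hg.2.2.2.dist_le_mul s s.2 t t.2
  rw [Real.coe_toNNReal _ hL.le, Real.dist_eq] at this
  exact this

lemma ext_inG (A m M L : ℝ) (hA : 0 < A) (hL : 0 < L)
    (f : BoundedContinuousFunction (Icc (0 : ℝ) A) ℝ) (hf : f ∈ GK A m M L) :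
    inG A m M L (IccExtend hA.le f) := by
  refine ⟨(f.continuous.Icc_extend').continuousOn, ?_, ?_, ?_⟩
  · intro s hs t ht hst
    rw [IccExtend_of_mem _ _ hs, IccExtend_of_mem _ _ ht]
    exact hf.1 _ _ hst
  · intro t ht
    rw [IccExtend_of_mem _ _ ht]
    exact hf.2.1 _
  · refine LipschitzOnWith.of_dist_le_mul fun s hs t ht => ?_
    rw [IccExtend_of_mem _ _ hs, IccExtend_of_mem _ _ ht, Real.coe_toNNReal _ hL.le, Real.dist_eq]
    exact hf.2.2 _ _

lemma log_lip (c a b : ℝ) (hc : 0 < c) (ha : c ≤ a) (hb : c ≤ b) :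
    |Real.log a - Real.log b| ≤ |a - b| / c := by
  have key : ∀ a b : ℝ, c ≤ a → c ≤ b → Real.log a - Real.log b ≤ |a - b| / c := by
    intro a b ha hb
    have ha0 : 0 < a := by linarith
    have hb0 : 0 < b := by linarith
    rw [← Real.log_div ha0.ne' hb0.ne']
    refine (Real.log_le_sub_one_of_pos (by positivity)).trans ?_
    have : a / b - 1 = (a - b) / b := by field_simp
    rw [this]
    calc (a - b) / b ≤ |a - b| / b := by gcongr; exact le_abs_self _
      _ ≤ _ := by gcongr
  rw [abs_le]
  refine ⟨?_, key a b ha hb⟩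
  have := key b a hb ha
  rw [abs_sub_comm] at this
  linarith

/-- Reindexed form of the basic inequality. -/
lemma basic_ineq {Ω : Type*} (Δ γ₀ : ℝ) (x z g₀ : ℝ → ℝ) (ε : ℤ → Ω → ℝ)
    (n : ℕ) (γ : ℝ) (g : ℝ → ℝ) (ω : Ω)
    (h : Qemp Δ γ₀ x z g₀ ε n γ g ω ≤ Qemp Δ γ₀ x z g₀ ε n γ₀ g₀ ω) (H : ℝ → ℝ)
    (hH : ∀ w, H w = -(Real.log (1 + γ₀ * x w) - Real.log (1 + γ * x w) +
      Real.log (g₀ (z w)) - Real.log (g (z w)))) :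
    ∑ i ∈ Finset.range n, (H (((i : ℝ) + 1) * Δ / n)) ^ 2 ≤
      2 * ∑ i ∈ Finset.range n, ε ((i : ℤ) + 1) ω * H (((i : ℝ) + 1) * Δ / n) := by
  rcases Nat.eq_zero_or_pos n with rfl | hn
  · simp
  have hn0 : (0 : ℝ) < n := by exact_mod_cast hn
  have hre : ∀ F : ℕ → ℝ, ∑ i ∈ Finset.Icc 1 n, F i = ∑ i ∈ Finset.range n, F (i + 1) := by
    intro F
    rw [Finset.range_eq_Ico, Finset.sum_Ico_add']
    rfl
  unfold Qemp at h
  rw [mul_le_mul_iff_right₀ (by positivity), hre, hre] at h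
  rw [← sub_nonpos, ← Finset.sum_sub_distrib] at h
  rw [← sub_nonpos, Finset.mul_sum, ← Finset.sum_sub_distrib]
  refine le_trans (le_of_eq ?_) h
  refine Finset.sum_congr rfl fun i _ => ?_
  rw [hH]
  push_cast
  ring

/-- Theorem 2: if `Q` has a unique minimum at `(γ₀, g₀)` and
`(γ̂ₙ, ĝₙ)` minimize `Qₙ` over `Γ × 𝒢`, then almost surely `γ̂ₙ → γ₀` and
`sup_{t ∈ [0,A]} |ĝₙ(t) - g₀(t)| → 0`. -/
theorem stmt5
    {Ω : Type*} [MeasurableSpace Ω] (μ : Measure Ω) [IsProbabilityMeasure μ]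
    (Δ A xm xM : ℝ) (hΔ : 0 < Δ) (hA : 0 < A) (hxm : 0 < xm) (hxM : 0 < xM)
    (x z : ℝ → ℝ)
    (hxcont : ContinuousOn x (Icc 0 Δ))
    (hxrange : ∀ w ∈ Icc (0 : ℝ) Δ, x w ∈ Ioo (-xm) xM)
    (hzcont : ContinuousOn z (Icc 0 Δ))
    (hzrange : ∀ w ∈ Icc (0 : ℝ) Δ, z w ∈ Icc 0 A)
    (hzmono : StrictMonoOn z (Icc 0 Δ))
    (U : ℤ → Ω → ℝ) (hUmeas : ∀ j, Measurable (U j))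
    (hUindep : iIndepFun U μ)
    (hUident : ∀ j, μ.map (U j) = μ.map (U 0))
    (σ : ℝ) (hσ : 0 < σ)
    (hUmean : ∫ ω, U 0 ω ∂μ = 0)
    (hUvar : ∫ ω, (U 0 ω) ^ 2 ∂μ = σ ^ 2)
    (hU8 : Integrable (fun ω => (U 0 ω) ^ 8) μ)
    (φ : ℝ) (hφ0 : φ ≠ 0) (hφ1 : |φ| < 1)
    (ε : ℤ → Ω → ℝ) (hεmeas : ∀ i, Measurable (ε i))
    (hεsum : ∀ᵐ ω ∂μ, ∀ i : ℤ, HasSum (fun j : ℕ => φ ^ j * U (i - (j : ℤ)) ω) (ε i ω))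
    (γ₀ : ℝ) (hγ₀ : γ₀ ∈ Ioo (-(1 / xM)) (1 / xm))
    (m M L : ℝ) (hm : 0 < m) (hmM : m < M) (hL : 0 < L)
    (g₀ : ℝ → ℝ) (hg₀ : inG A m M L g₀)
    (huniq : ∀ γ ∈ Icc (-(1 / xM)) (1 / xm), ∀ g : ℝ → ℝ, inG A m M L g →
      Qlim Δ γ₀ x z g₀ γ g = 0 → γ = γ₀ ∧ ∀ t ∈ Icc (0 : ℝ) A, g t = g₀ t)
    (γhat : ℕ → Ω → ℝ) (ghat : ℕ → Ω → ℝ → ℝ)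
    (hest : ∀ᵐ ω ∂μ, ∀ n : ℕ,
      γhat n ω ∈ Icc (-(1 / xM)) (1 / xm) ∧ inG A m M L (ghat n ω) ∧
      ∀ γ ∈ Icc (-(1 / xM)) (1 / xm), ∀ g : ℝ → ℝ, inG A m M L g →
        Qemp Δ γ₀ x z g₀ ε n (γhat n ω) (ghat n ω) ω ≤ Qemp Δ γ₀ x z g₀ ε n γ g ω) :
    ∀ᵐ ω ∂μ, Tendsto (fun n : ℕ => γhat n ω) atTop (𝓝 γ₀) ∧
      ∀ e > (0 : ℝ), ∃ N : ℕ, ∀ n ≥ N, ∀ t ∈ Icc (0 : ℝ) A, |ghat n ω t - g₀ t| < e := by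
  have hpos : ∀ γ ∈ Icc (-(1 / xM)) (1 / xm), ∀ w ∈ Icc (0 : ℝ) Δ, 0 < 1 + γ * x w := by
    intro γ hγ w hw
    obtain ⟨h1, h2⟩ := hxrange w hw
    rcases le_or_gt 0 (x w) with h | h
    · have a1 := mul_le_mul_of_nonneg_right hγ.1 h
      have a2 : 1 / xM * x w < 1 := by rw [one_div, inv_mul_lt_iff₀ hxM]; linarith
      linarith
    · have a1 := mul_le_mul_of_nonpos_right hγ.2 h.le
      have a2 : 1 / xm * (-x w) < 1 := by rw [one_div, inv_mul_lt_iff₀ hxm]; linarith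
      linarith
  have hc : ∃ c > 0, ∀ γ ∈ Icc (-(1 / xM)) (1 / xm), ∀ w ∈ Icc (0 : ℝ) Δ, c ≤ 1 + γ * x w := by
    have hcont : ContinuousOn (fun p : ℝ × ℝ => 1 + p.1 * x p.2)
        (Icc (-(1 / xM)) (1 / xm) ×ˢ Icc (0 : ℝ) Δ) := by
      refine continuousOn_const.add (continuousOn_fst.mul (hxcont.comp continuousOn_snd ?_))
      intro p hp
      exact hp.2
    obtain ⟨p, hp, hpm⟩ := (isCompact_Icc.prod isCompact_Icc).exists_isMinOn
      ⟨(γ₀, 0), ⟨hγ₀.1.le, hγ₀.2.le⟩, le_rfl, hΔ.le⟩ hcont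
    exact ⟨_, hpos p.1 hp.1 p.2 hp.2, fun γ hγ w hw => hpm (a := (γ, w)) ⟨hγ, hw⟩⟩
  obtain ⟨c, hc0, hc⟩ := hc
  have hγ₀' : γ₀ ∈ Icc (-(1 / xM)) (1 / xm) := ⟨hγ₀.1.le, hγ₀.2.le⟩
  have hFcont : ∀ γ ∈ Icc (-(1 / xM)) (1 / xm), ∀ g, inG A m M L g →
      ContinuousOn (fun w => Real.log (1 + γ * x w)) (Icc 0 Δ) ∧
      ContinuousOn (fun w => Real.log (g (z w))) (Icc 0 Δ) := by
    intro γ hγ g hg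
    refine ⟨ContinuousOn.log (by fun_prop) fun w hw => (hpos γ hγ w hw).ne',
      ContinuousOn.log (hg.1.comp hzcont hzrange) fun w hw => ?_⟩
    have := (hg.2.2.1 _ (hzrange w hw)).1
    linarith
  filter_upwards [noise_aux μ U hUmeas hUindep hUident hUmean hU8 φ hφ1 ε hεsum, hest]
    with ω hnoise hω
  obtain ⟨he, C, hC⟩ := hnoise
  set p : ℕ → ℝ × BoundedContinuousFunction (Icc (0 : ℝ) A) ℝ :=
    fun n => (γhat n ω, toB A (ghat n ω) (hω n).2.1.1) with hp
  have hlim : Tendsto p atTop (𝓝 (γ₀, toB A g₀ hg₀.1)) := by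
    refine ((isCompact_Icc (a := -(1 / xM)) (b := 1 / xm)).prod
      (GK_compact A m M L)).tendsto_nhds_of_unique_mapClusterPt
      (Eventually.of_forall fun n => ⟨(hω n).1, toB_mem A m M L hL _ (hω n).2.1⟩) ?_
    rintro ⟨γ, f⟩ ⟨hγ, hf⟩ hcl
    obtain ⟨ψ, hψ, hconv⟩ := hcl.tendsto_subseq
    simp only at hγ hf
    have hG := ext_inG A m M L hA hL f hf
    set g : ℝ → ℝ := IccExtend hA.le f with hg
    have hgf : ∀ t (ht : t ∈ Icc (0 : ℝ) A), g t = f ⟨t, ht⟩ := fun t ht => IccExtend_of_mem _ _ ht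
    rw [nhds_prod_eq, tendsto_prod_iff'] at hconv
    obtain ⟨hconv1, hconv2⟩ := hconv
    have hQ : Qlim Δ γ₀ x z g₀ γ g = 0 := by
      have hl := limit_aux Δ hΔ (fun i : ℕ => ε ((i : ℤ) + 1) ω) he C hC
        (fun w => -(Real.log (1 + γ₀ * x w) - Real.log (1 + γ * x w) +
          Real.log (g₀ (z w)) - Real.log (g (z w))))
        ((((hFcont γ₀ hγ₀' g₀ hg₀).1.sub (hFcont γ hγ g hG).1).add
          (hFcont γ₀ hγ₀' g₀ hg₀).2).sub (hFcont γ hγ g hG).2).neg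
        (fun k w => -(Real.log (1 + γ₀ * x w) - Real.log (1 + γhat (ψ k) ω * x w) +
          Real.log (g₀ (z w)) - Real.log (ghat (ψ k) ω (z w)))) ψ hψ ?_ ?_
      · simpa only [neg_sq, Qlim] using hl
      · intro r hr
        have e1 := Metric.tendsto_nhds.1 hconv1 (c * r / 2 / (xm + xM)) (by positivity)
        have e2 := Metric.tendsto_nhds.1 hconv2 (m * r / 2) (by positivity)
        filter_upwards [e1, e2] with k h1 h2 w hw
        simp only [hp, Function.comp_apply] at h1 h2
        have hb := hω (ψ k)
        have l1 := log_lip c _ _ hc0 (hc _ hb.1 w hw) (hc γ hγ w hw)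
        have l2 := log_lip m _ _ hm (hb.2.1.2.2.1 _ (hzrange w hw)).1 (hG.2.2.1 _ (hzrange w hw)).1
        have b1 : |1 + γhat (ψ k) ω * x w - (1 + γ * x w)| / c ≤ r / 2 := by
          have : 1 + γhat (ψ k) ω * x w - (1 + γ * x w) = (γhat (ψ k) ω - γ) * x w := by ring
          rw [this, abs_mul, div_le_iff₀ hc0]
          have hx : |x w| ≤ xm + xM := by
            have := hxrange w hw
            rw [abs_le]; constructor <;> linarith [this.1, this.2]
          rw [Real.dist_eq] at h1
          calc _ ≤ (c * r / 2 / (xm + xM)) * (xm + xM) := by gcongr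
            _ = _ := by field_simp
        have b2 : |ghat (ψ k) ω (z w) - g (z w)| / m ≤ r / 2 := by
          have hd := BoundedContinuousFunction.dist_coe_le_dist (f := toB A (ghat (ψ k) ω) hb.2.1.1)
            (g := f) ⟨z w, hzrange w hw⟩
          rw [toB_apply, ← hgf, Real.dist_eq] at hd
          rw [div_le_iff₀ hm]
          simp only at hd
          linarith
        have l1' := abs_le.1 l1
        have l2' := abs_le.1 l2
        rw [abs_le]
        constructor <;> linarith [l1'.1, l1'.2, l2'.1, l2'.2]
      · intro k
        exact basic_ineq Δ γ₀ x z g₀ ε (ψ k) _ _ ω ((hω (ψ k)).2.2 γ₀ hγ₀' g₀ hg₀) _ (fun w => rfl)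
    obtain ⟨q1, q2⟩ := huniq γ hγ g hG hQ
    refine Prod.ext q1 ?_
    ext t
    have := q2 t t.2
    rw [hgf t t.2] at this
    exact this
  rw [nhds_prod_eq, tendsto_prod_iff'] at hlim
  refine ⟨hlim.1, fun e he => ?_⟩
  obtain ⟨N, hN⟩ := Metric.tendsto_atTop.1 hlim.2 e he
  refine ⟨N, fun n hn t ht => ?_⟩
  have hd := BoundedContinuousFunction.dist_coe_le_dist (f := toB A (ghat n ω) (hω n).2.1.1)
    (g := toB A g₀ hg₀.1) ⟨t, ht⟩
  rw [toB_apply, toB_apply, Real.dist_eq] at hd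
  exact hd.trans_lt (hN n hn)
end
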